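/- For every feasible solution x* of the LP relaxation of the T-tour problem, there exists a T-tour F of G with c(F) ≤ (11/7)·c(x*). In particular, the integrality ratio of the LP relaxation of the T-tour problem is at most 11/7. -/

import Mathlib

open Finset
open scoped Classical symmDiff

/-- A multigraph on vertex type `V` with edge type `E`, given by the two endpoints
of each edge. -/
structure MultiGraph (V E : Type*) where
  fst : E → V
  snd : E → V

namespace MultiGraph

variable {V E : Type*} [Fintype V] [DecidableEq V] [Fintype E] [DecidableEq E]
variable (G : MultiGraph V E)

/-- The cut `δ(U)`: the set of edges with exactly one endpoint in `U`. -/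
noncomputable def cut (U : Finset V) : Finset E :=
  univ.filter fun e => (G.fst e ∈ U ∧ G.snd e ∉ U) ∨ (G.fst e ∉ U ∧ G.snd e ∈ U)

/-- The degree of `v` with respect to the edge multiset `F`. -/
def deg (F : Multiset E) (v : V) : ℕ :=
  (F.map fun e => (if G.fst e = v then 1 else 0) + (if G.snd e = v then 1 else 0)).sum

/-- `odd(F)`: the set of vertices of odd degree in `(V, F)`. -/
noncomputable def oddVerts (F : Multiset E) : Finset V :=
  univ.filter fun v => Odd (G.deg F v)

/-- Adjacency via an edge satisfying the predicate `P`. -/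
def Adj (P : E → Prop) (a b : V) : Prop :=
  ∃ e, P e ∧ ((G.fst e = a ∧ G.snd e = b) ∨ (G.fst e = b ∧ G.snd e = a))

/-- `(V, {e | P e})` is a connected (spanning) subgraph. -/
def ConnectedOn (P : E → Prop) : Prop :=
  ∀ u w : V, Relation.ReflTransGen (G.Adj P) u w

/-- The graph `G` is connected. -/
def Connected : Prop := G.ConnectedOn fun _ => True

/-- A `T`-tour: a multi-subset `F` of the edges such that `(V, F)` is connected and
`odd(F) = T`. -/
def IsTTour (T : Finset V) (F : Multiset E) : Prop :=
  G.ConnectedOn (· ∈ F) ∧ G.oddVerts F = T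

/-- `S` is the edge set of a spanning tree of `G`. -/
def IsSpanningTree (S : Finset E) : Prop :=
  G.ConnectedOn (· ∈ S) ∧ S.card + 1 = Fintype.card V

/-- `δ(𝒲)`: the set of edges whose endpoints lie in different parts of the
partition `𝒲` of `V`. -/
noncomputable def partitionCut (W : Finpartition (univ : Finset V)) : Finset E :=
  univ.filter fun e => ∀ P ∈ W.parts, ¬(G.fst e ∈ P ∧ G.snd e ∈ P)

/-- Feasibility for the standard LP relaxation of the `T`-tour problem. -/
def LPFeasible (T : Finset V) (x : E → ℝ) : Prop :=
  (∀ e, 0 ≤ x e) ∧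
  (∀ U : Finset V, U.Nonempty → U ≠ univ → Even ((T ∩ U).card) →
    2 ≤ ∑ e ∈ G.cut U, x e) ∧
  (∀ W : Finpartition (univ : Finset V),
    (W.parts.card : ℝ) - 1 ≤ ∑ e ∈ G.partitionCut W, x e)

/-- `C` is a cut of `G`, i.e. `C = δ(U)` for some nonempty proper `U ⊆ V`. -/
def IsCut (C : Finset E) : Prop :=
  ∃ U : Finset V, U.Nonempty ∧ U ≠ univ ∧ C = G.cut U

/-- A narrow cut: a cut `C` with `x(C) < 2`. -/
def Narrow (x : E → ℝ) (C : Finset E) : Prop :=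
  G.IsCut C ∧ ∑ e ∈ C, x e < 2

/-- `𝒩`: the set of narrow cuts. -/
noncomputable def narrowCuts (x : E → ℝ) : Finset (Finset E) :=
  univ.filter fun C => G.Narrow x C

/-- A narrow cut `C` is lonely for `S` if `|S ∩ C| = 1`. -/
def Lonely (x : E → ℝ) (S C : Finset E) : Prop :=
  G.Narrow x C ∧ (S ∩ C).card = 1

/-- `ℒ_S`: the set of lonely cuts of `S`. -/
noncomputable def lonelyCuts (x : E → ℝ) (S : Finset E) : Finset (Finset E) :=
  univ.filter fun C => G.Lonely x S C

/-- `L_S = ∪_{C ∈ ℒ_S} (S ∩ C)`: the set of lonely edges of `S`. -/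
noncomputable def lonelyEdges (x : E → ℝ) (S : Finset E) : Finset E :=
  S.filter fun e => ∃ C, G.Lonely x S C ∧ e ∈ C

/-- The incidence vector `χ^F` of an edge set `F`. -/
def chi (F : Finset E) : E → ℝ := fun e => if e ∈ F then 1 else 0

/-- The vector `v^C = (1/(2 - x(C))) · Σ_{S : C ∈ ℒ_S} p_S · χ^{S ∩ C}`. -/
noncomputable def vC (x : E → ℝ) (p : Finset E → ℝ) (C : Finset E) : E → ℝ :=
  fun e => (1 / (2 - ∑ f ∈ C, x f)) *
    ∑ S : Finset E, (if G.Lonely x S C then p S else 0) * chi (S ∩ C) e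

/-- The modified cost
`c^S(e) = c(e) + 2·(Σ_{C ∈ ℒ_S : e ∈ C} c(S ∩ C) − max_{C ∈ ℒ_S : e ∈ C} c(S ∩ C))`,
where the maximum over the empty set is `0`. -/
noncomputable def modCost (c x : E → ℝ) (S : Finset E) (e : E) : ℝ :=
  c e + 2 * ((∑ C ∈ (G.lonelyCuts x S).filter (fun C => e ∈ C), ∑ f ∈ S ∩ C, c f)
    - (if h : ((G.lonelyCuts x S).filter (fun C => e ∈ C)).Nonempty
        then ((G.lonelyCuts x S).filter (fun C => e ∈ C)).sup' h (fun C => ∑ f ∈ S ∩ C, c f)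
        else 0))

/-- The set of vertices reachable from `v` using edges satisfying `P`. -/
noncomputable def reachSet (P : E → Prop) (v : V) : Finset V :=
  univ.filter fun w => Relation.ReflTransGen (G.Adj P) v w

end MultiGraph

/-!
The partition inequalities say that `x` dominates a convex combination `∑ S, p S * χ^S` of connected
edge sets. Fix such an `S` and a `T`-join `I ⊆ S`; there are two ways to make a tour out of `S`.
The first adds a join that fixes the parities, paid for by `x / 2 + χ^I / 14` and a multiple of the
vector `v^C` on every narrow cut `C` that `S` meets in an even number of edges. The second deletes
the lonely edges before adding a join, and reconnects by doubling all but the costliest of the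
lonely edges that an edge of the join bypasses; here `2 * x / 7` and multiples of `χ^I`, `χ^S` pay
for the join. Mixing the two with weights `2 / 3` and `1 / 3` cancels the cost of `I`, and averaging
over `S` leaves, besides `11 / 7 * c(x)`, one nonpositive term for every narrow cut. The joins exist
by the Edmonds–Johnson theorem, which is proved by descent: contract either side of a tight
nontrivial cut, or else move along a direction that keeps the tight vertex cuts tight.
-/

theorem exists_le_of_sum_mul_le {ι : Type*} {s : Finset ι} {p f : ι → ℝ} {M : ℝ}
    (hp : ∀ i ∈ s, 0 ≤ p i) (hne : ∃ i ∈ s, p i ≠ 0)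
    (h : ∑ i ∈ s, p i * f i ≤ (∑ i ∈ s, p i) * M) : ∃ i ∈ s, p i ≠ 0 ∧ f i ≤ M := by
  by_contra! hlt
  obtain ⟨j, hj, hpj⟩ := hne
  refine h.not_gt ?_
  rw [sum_mul]
  refine sum_lt_sum (fun i hi => ?_) ⟨j, hj, ?_⟩
  · rcases eq_or_ne (p i) 0 with h0 | h0
    · simp [h0]
    · exact mul_le_mul_of_nonneg_left (hlt i hi h0).le (hp i hi)
  · exact mul_lt_mul_of_pos_left (hlt j hj hpj) ((hp j hj).lt_of_ne' hpj)

theorem exists_add_mul_nonneg_of_exists_neg {ι : Type*} [Finite ι] {s a : ι → ℝ}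
    (hs : ∀ i, 0 ≤ s i) (h0 : ∀ i, s i = 0 → 0 ≤ a i) (hneg : ∃ i, a i < 0) :
    ∃ ε > 0, (∀ i, 0 ≤ s i + ε * a i) ∧ ∃ i, s i ≠ 0 ∧ s i + ε * a i = 0 := by
  have := Fintype.ofFinite ι
  obtain ⟨i₀, hi₀⟩ := hneg
  obtain ⟨j, hj, hmin⟩ := exists_min_image {i | a i < 0} (fun i => s i / -a i)
    ⟨i₀, by simpa using hi₀⟩
  simp only [mem_filter, mem_univ, true_and] at hj hmin
  have hsj : s j ≠ 0 := fun h => (h0 j h).not_gt hj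
  have hε : 0 < s j / -a j := div_pos ((hs j).lt_of_ne' hsj) (by linarith)
  refine ⟨s j / -a j, hε, fun i => ?_, j, hsj, ?_⟩
  · by_cases h : a i < 0
    · have := hmin i h
      rw [le_div_iff₀ (by linarith)] at this
      linarith
    · have := mul_nonneg hε.le (not_lt.1 h)
      linarith [hs i]
  · rw [div_neg, neg_mul, div_mul_cancel₀ _ hj.ne, add_neg_cancel]

theorem zmodTwo_eq_zero_or_eq_one (a : ZMod 2) : a = 0 ∨ a = 1 := by revert a; decide

theorem zmodTwo_ne_one_iff {a : ZMod 2} : a ≠ 1 ↔ a = 0 := by revert a; decide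

theorem zmodTwo_ne_zero_iff {a : ZMod 2} : a ≠ 0 ↔ a = 1 := by revert a; decide

theorem zmodTwo_add_eq_one_iff_ne {a b : ZMod 2} : a + b = 1 ↔ a ≠ b := by
  revert a b; decide

theorem sum_add_smul {E : Type*} (A : Finset E) (y d : E → ℝ) (ε : ℝ) :
    ∑ e ∈ A, (y + ε • d) e = ∑ e ∈ A, y e + ε * ∑ e ∈ A, d e := by
  simp only [Pi.add_apply, Pi.smul_apply, smul_eq_mul, sum_add_distrib, mul_sum]

theorem exists_intCast_mul_of_abs_eq {ι : Type*} {s : ι → ℝ} {c : ℝ} {A : Finset ι}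
    (h : ∀ i ∈ A, |s i| = c) : ∃ k : ℤ, ∑ i ∈ A, s i = k * c ∧ (k : ZMod 2) = A.card := by
  induction A using Finset.induction_on with
  | empty => exact ⟨0, by simp, by simp⟩
  | insert i A hi ih =>
    obtain ⟨k, hk, hkA⟩ := ih fun j hj => h j (mem_insert_of_mem hj)
    rw [sum_insert hi, card_insert_of_notMem hi, hk, Nat.cast_add, Nat.cast_one, ← hkA]
    rcases abs_choice (s i) with hs | hs <;> rw [h i (mem_insert_self i A)] at hs
    · exact ⟨k + 1, by rw [← hs]; push_cast; ring, by push_cast; rfl⟩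
    · refine ⟨k - 1, by rw [show s i = -c by linarith]; push_cast; ring, ?_⟩
      push_cast
      exact CharTwo.sub_eq_add _ _

theorem sum_insert_le_add {E : Type*} {S : Finset E} {e₀ : E} {w : E → ℝ} (h : 0 ≤ w e₀) :
    ∑ e ∈ insert e₀ S, w e ≤ w e₀ + ∑ e ∈ S, w e := by
  by_cases he₀ : e₀ ∈ S
  · rw [insert_eq_of_mem he₀]
    linarith
  · rw [sum_insert he₀]

theorem card_sdiff_inter_add_card_inter {α : Type*} {A B : Finset α} (h : A ⊆ B) (C : Finset α) :
    ((B \ A) ∩ C).card + (A ∩ C).card = (B ∩ C).card := by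
  rw [← card_union_of_disjoint (disjoint_sdiff_self_left.mono inf_le_left inf_le_left),
    ← union_inter_distrib_right, sdiff_union_of_subset h]

namespace MultiGraph

universe u v

theorem chi_injective {E : Type*} : Function.Injective (chi : Finset E → E → ℝ) := fun S S' h => by
  ext e
  have := congrFun h e
  by_cases h1 : e ∈ S <;> by_cases h2 : e ∈ S' <;> simp_all [chi]

theorem sum_mul_chi {E : Type*} (w : E → ℝ) (S A : Finset E) :
    ∑ e ∈ A, w e * chi S e = ∑ e ∈ S ∩ A, w e := by
  simp [chi, sum_ite_mem, inter_comm]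

section DominatedDistribution

variable {E : Type*} [Fintype E]

/-- The probability that a random subset of `E` with distribution `p` contains `e`. -/
noncomputable def marginal (p : Finset E → ℝ) (e : E) : ℝ := ∑ S with e ∈ S, p S

/-- `p` is a probability distribution on the family `𝒮` whose vector of marginals is at most `x`;
equivalently, `∑ S, p S * χ^S` is a convex combination of members of `𝒮` dominated by `x`. -/
structure DominatedDistribution (𝒮 : Set (Finset E)) (x : E → ℝ) (p : Finset E → ℝ) : Prop where
  nonneg : ∀ S, 0 ≤ p S
  sum_eq_one : ∑ S, p S = 1
  mem_of_ne_zero : ∀ S, p S ≠ 0 → S ∈ 𝒮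
  marginal_le : ∀ e, marginal p e ≤ x e

theorem sum_marginal_mul (p : Finset E → ℝ) (A : Finset E) (w : E → ℝ) :
    ∑ e ∈ A, marginal p e * w e = ∑ S, p S * ∑ e ∈ S ∩ A, w e := by
  simp only [marginal, sum_mul, mul_sum, sum_filter]
  rw [sum_comm]
  refine sum_congr rfl fun S _ => ?_
  simp only [ite_mul, zero_mul, sum_ite_mem, inter_comm]

theorem sum_marginal (p : Finset E → ℝ) (A : Finset E) :
    ∑ e ∈ A, marginal p e = ∑ S, p S * (S ∩ A).card := by
  simpa using sum_marginal_mul p A fun _ => 1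

namespace DominatedDistribution

variable {𝒮 : Set (Finset E)} {x : E → ℝ} {p : Finset E → ℝ}

theorem sum_mul_sum_inter_le (hp : DominatedDistribution 𝒮 x p) (A : Finset E) {w : E → ℝ}
    (hw : ∀ e, 0 ≤ w e) : ∑ S, p S * ∑ e ∈ S ∩ A, w e ≤ ∑ e ∈ A, x e * w e := by
  rw [← sum_marginal_mul]
  exact sum_le_sum fun e _ => mul_le_mul_of_nonneg_right (hp.marginal_le e) (hw e)

theorem sum_mul_sum_le (hp : DominatedDistribution 𝒮 x p) {w : E → ℝ} (hw : ∀ e, 0 ≤ w e) :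
    ∑ S, p S * ∑ e ∈ S, w e ≤ ∑ e, x e * w e := by
  simpa using hp.sum_mul_sum_inter_le univ hw

theorem exists_le_of_sum_mul_le (hp : DominatedDistribution 𝒮 x p) {f : Finset E → ℝ} {M : ℝ}
    (h : ∑ S, p S * f S ≤ M) : ∃ S, p S ≠ 0 ∧ f S ≤ M := by
  obtain ⟨S, -, hS⟩ := _root_.exists_le_of_sum_mul_le (s := univ) (f := f) (M := M)
    (fun S _ => hp.nonneg S) (exists_ne_zero_of_sum_ne_zero (by simp [hp.sum_eq_one]))
    (by rwa [hp.sum_eq_one, one_mul])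
  exact ⟨S, hS⟩

end DominatedDistribution

open scoped Pointwise in
theorem exists_mem_convexHull_le {A : Set (E → ℝ)} (hA : A.Finite) {x : E → ℝ}
    (h : ∀ w : E → ℝ, 0 ≤ w → ∃ a ∈ A, w ⬝ᵥ a ≤ w ⬝ᵥ x) : ∃ a ∈ convexHull ℝ A, a ≤ x := by
  suffices hx : x ∈ convexHull ℝ A + Set.Ici 0 by
    obtain ⟨a, ha, z, hz, rfl⟩ := hx
    exact ⟨a, ha, le_add_of_nonneg_right hz⟩
  by_contra hx
  obtain ⟨f, u, hfx, hfu⟩ := geometric_hahn_banach_point_closed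
    ((convex_convexHull ℝ A).add (convex_Ici (0 : E → ℝ)))
    (isClosed_Ici.add_left_of_isCompact (hA.isCompact_convexHull ℝ)) hx
  have hf : ∀ z, f z = (fun e => f (Pi.single e 1)) ⬝ᵥ z := fun z => by
    conv_lhs => rw [← univ_sum_single z, map_sum]
    refine sum_congr rfl fun e _ => ?_
    rw [← mul_one (z e), ← smul_eq_mul, Pi.single_smul, map_smul, smul_eq_mul, mul_comm]
    simp
  have hfA : ∀ a ∈ A, ∀ z, 0 ≤ z → u < f a + f z := fun a ha z hz => by
    simpa using hfu (a + z) (Set.add_mem_add (subset_convexHull ℝ A ha) hz)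
  obtain ⟨a₀, ha₀, -⟩ := h 0 le_rfl
  have hw : 0 ≤ fun e => f (Pi.single e 1) := fun e => by
    by_contra! hneg
    simp only [Pi.zero_apply] at hneg
    have hu : u < f a₀ := by simpa using hfA a₀ ha₀ 0 le_rfl
    have := hfA a₀ ha₀ (((f a₀ - u) / -f (Pi.single e 1)) • Pi.single e 1)
      (smul_nonneg (div_nonneg (by linarith) (by linarith)) (Pi.single_nonneg.2 zero_le_one))
    rw [map_smul, smul_eq_mul, div_neg, neg_mul, div_mul_cancel₀ _ hneg.ne] at this
    linarith
  obtain ⟨a, ha, hle⟩ := h _ hw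
  rw [← hf, ← hf] at hle
  have := hfA a ha 0 le_rfl
  rw [map_zero] at this
  linarith

theorem exists_dominatedDistribution {𝒮 : Set (Finset E)} {x : E → ℝ}
    (h : ∀ w : E → ℝ, (∀ e, 0 ≤ w e) → ∃ S ∈ 𝒮, ∑ e ∈ S, w e ≤ ∑ e, w e * x e) :
    ∃ p, DominatedDistribution 𝒮 x p := by
  obtain ⟨a, ha, hax⟩ := exists_mem_convexHull_le (A := 𝒮.toFinset.image chi)
    (finite_toSet _) (x := x) fun w hw => by
      obtain ⟨S, hS, hle⟩ := h w hw
      exact ⟨chi S, by simpa using ⟨S, hS, rfl⟩, by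
        simpa [dotProduct, sum_mul_chi] using hle⟩
  rw [Finset.mem_convexHull'] at ha
  obtain ⟨q, hq0, hq1, rfl⟩ := ha
  rw [sum_image chi_injective.injOn] at hq1 hax
  refine ⟨fun S => if S ∈ 𝒮 then q (chi S) else 0, fun S => ?_, ?_, fun S hS => ?_, fun e => ?_⟩
  · split_ifs with hS
    · exact hq0 _ (mem_image_of_mem _ (by simpa using hS))
    · exact le_rfl
  · rw [← hq1, ← sum_filter]
    exact sum_congr (by ext; simp) fun _ _ => rfl
  · by_contra h
    simp [h] at hS
  · refine le_of_eq_of_le ?_ (hax e)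
    rw [Finset.sum_apply, marginal, sum_filter, ← sum_subset (subset_univ 𝒮.toFinset)]
    · refine sum_congr rfl fun S hS => ?_
      have : S ∈ 𝒮 := by simpa using hS
      by_cases he : e ∈ S <;> simp [he, chi, this]
    · intro S _ hS
      have : S ∉ 𝒮 := by simpa using hS
      simp [this]

end DominatedDistribution

section Coboundary

variable {V E : Type*} (G : MultiGraph V E)

/-- The coboundary over `ZMod 2` of a vertex labelling. Cuts are encoded by labellings
`w : V → ZMod 2`: the edge `e` lies in `δ({v | w v = 1})` iff `G.coboundary w e = 1`. -/
def coboundary (w : V → ZMod 2) (e : E) : ZMod 2 := w (G.fst e) + w (G.snd e)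

theorem coboundary_add (w w' : V → ZMod 2) (e : E) :
    G.coboundary (w + w') e = G.coboundary w e + G.coboundary w' e := by
  simp only [coboundary, Pi.add_apply]; ring

theorem coboundary_one_add (w : V → ZMod 2) (e : E) :
    G.coboundary (1 + w) e = G.coboundary w e := by
  simp only [coboundary, Pi.add_apply, Pi.one_apply]
  linear_combination (CharTwo.add_self_eq_zero (1 : ZMod 2))

theorem coboundary_eq_one_iff {w : V → ZMod 2} {e : E} :
    G.coboundary w e = 1 ↔ w (G.fst e) ≠ w (G.snd e) :=
  zmodTwo_add_eq_one_iff_ne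

theorem coboundary_eq_zero_iff {w : V → ZMod 2} {e : E} :
    G.coboundary w e = 0 ↔ w (G.fst e) = w (G.snd e) := by
  rw [← zmodTwo_ne_one_iff, Ne, coboundary_eq_one_iff, not_not]

variable [Fintype E]

/-- The cut `δ({v | w v = 1})` encoded by the labelling `w`. -/
noncomputable def cutOf (w : V → ZMod 2) : Finset E := {e | G.coboundary w e = 1}

variable {G} in
theorem mem_cutOf {w : V → ZMod 2} {e : E} : e ∈ G.cutOf w ↔ G.coboundary w e = 1 := by
  simp [cutOf]

variable {G} in
theorem mem_cutOf_iff_ne {w : V → ZMod 2} {e : E} :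
    e ∈ G.cutOf w ↔ w (G.fst e) ≠ w (G.snd e) := by
  rw [mem_cutOf, coboundary_eq_one_iff]

variable {G} in
theorem notMem_cutOf {w : V → ZMod 2} {e : E} : e ∉ G.cutOf w ↔ G.coboundary w e = 0 := by
  rw [mem_cutOf, ← Ne, zmodTwo_ne_one_iff]

theorem cutOf_one_add (w : V → ZMod 2) : G.cutOf (1 + w) = G.cutOf w := by
  simp only [cutOf, coboundary_one_add]

theorem sum_coboundary (w : V → ZMod 2) (J : Finset E) :
    ∑ e ∈ J, G.coboundary w e = (J ∩ G.cutOf w).card := by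
  have h (e : E) : G.coboundary w e = if e ∈ G.cutOf w then 1 else 0 := by
    split_ifs with he
    · exact mem_cutOf.1 he
    · exact notMem_cutOf.1 he
  simp only [h, sum_ite_mem, sum_const, nsmul_eq_mul, mul_one]

end Coboundary

section Join

variable {V E : Type*} [Fintype V] (G : MultiGraph V E)

/-- `J` is a `T`-join, where `T = {v | τ v = 1}`: the `ZMod 2`-boundary of `J` is `τ`. Only the
pairing of this identity with all labellings `w` is recorded, i.e. the parity of `J` in each cut. -/
def IsJoin (τ : V → ZMod 2) (J : Finset E) : Prop :=
  ∀ w : V → ZMod 2, ∑ e ∈ J, G.coboundary w e = τ ⬝ᵥ w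

/-- Membership in the dominant of the `T`-join polytope, `T = {v | τ v = 1}`, as described by
the inequalities `y(δ(U)) ≥ 1` for `|T ∩ U|` odd. -/
structure JoinFeasible [Fintype E] (τ : V → ZMod 2) (y : E → ℝ) : Prop where
  nonneg : ∀ e, 0 ≤ y e
  one_le_sum_cutOf : ∀ w : V → ZMod 2, τ ⬝ᵥ w = 1 → 1 ≤ ∑ e ∈ G.cutOf w, y e

end Join

section Contraction

/-- The Edmonds–Johnson theorem for graphs with vertex set `V` and edge set `E`: every feasible
point of the `T`-join relaxation costs at least as much as some `T`-join. -/
def EdmondsJohnson (V : Type u) (E : Type v) [Fintype V] [Fintype E] : Prop :=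
  ∀ (G : MultiGraph V E) (τ : V → ZMod 2) (y c : E → ℝ), G.JoinFeasible τ y → (∀ e, 0 ≤ c e) →
    ∃ J, G.IsJoin τ J ∧ ∑ e ∈ J, c e ≤ ∑ e, c e * y e

/-- The graph obtained by identifying vertices with the same image under `π`. -/
def map {V V' E : Type*} (π : V → V') (G : MultiGraph V E) : MultiGraph V' E where
  fst := π ∘ G.fst
  snd := π ∘ G.snd

theorem coboundary_map {V V' E : Type*} (π : V → V') (G : MultiGraph V E) (w : V' → ZMod 2) :
    (G.map π).coboundary w = G.coboundary (w ∘ π) := rfl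

/-- The push-forward of `τ` along `π`; it describes the terminals of a contracted graph. -/
noncomputable def fiberSum {V V' : Type*} [Fintype V] (π : V → V') (τ : V → ZMod 2) :
    V' → ZMod 2 := fun v' => ∑ v with π v = v', τ v

theorem fiberSum_dotProduct {V V' : Type*} [Fintype V] [Fintype V'] (π : V → V')
    (τ : V → ZMod 2) (w : V' → ZMod 2) : fiberSum π τ ⬝ᵥ w = τ ⬝ᵥ (w ∘ π) := by
  simp only [fiberSum, dotProduct, sum_mul, sum_filter, ite_mul, zero_mul]
  rw [sum_comm]
  simp

variable {V : Type u} {E : Type v} [Fintype V] [Fintype E] {G : MultiGraph V E} {τ : V → ZMod 2}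
  {y : E → ℝ}

/-- Identifying the vertices of `U` turns the labellings of the quotient into the labellings that
are constant on `U`. -/
theorem exists_distribution_of_contract
    (ih : ∀ (V' : Type u) [Fintype V'], Fintype.card V' < Fintype.card V → EdmondsJohnson V' E)
    (U : Set V) {a b : V} (hab : a ≠ b) (ha : a ∈ U) (hb : b ∈ U) (hy0 : ∀ e, 0 ≤ y e)
    (hy : ∀ w, (∀ u ∈ U, w u = w a) → τ ⬝ᵥ w = 1 → 1 ≤ ∑ e ∈ G.cutOf w, y e) :
    ∃ p, DominatedDistribution
      {J | ∀ w, (∀ u ∈ U, w u = w a) → ∑ e ∈ J, G.coboundary w e = τ ⬝ᵥ w} y p := by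
  let π : V → V := fun v => if v ∈ U then a else v
  let ρ : V → Set.range π := Set.rangeFactorization π
  have hρ : ∀ u ∈ U, ρ u = ρ a := fun u hu => Subtype.ext (by
    simp only [ρ, Set.rangeFactorization, π, if_pos hu, if_pos ha])
  have hcard : Fintype.card (Set.range π) < Fintype.card V :=
    Fintype.card_lt_of_surjective_not_injective ρ Set.rangeFactorization_surjective
      fun h => hab (h (hρ b hb)).symm
  have hfeas : (G.map ρ).JoinFeasible (fiberSum ρ τ) y := by
    refine ⟨hy0, fun w hw => ?_⟩
    rw [fiberSum_dotProduct] at hw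
    exact hy _ (fun u hu => congrArg w (hρ u hu)) hw
  refine exists_dominatedDistribution fun c hc => ?_
  obtain ⟨J, hJ, hcost⟩ := ih _ hcard _ _ y c hfeas hc
  refine ⟨J, fun w hw => ?_, hcost⟩
  have hfactor : w = (fun v' : Set.range π => w v') ∘ ρ := by
    funext v
    by_cases hv : v ∈ U
    · simp [ρ, π, hv, hw v hv]
    · simp [ρ, π, hv]
  rw [hfactor, ← fiberSum_dotProduct ρ τ, ← hJ, coboundary_map]

end Contraction

section Gluing

variable {E : Type*} [Fintype E]

/-- The mean of `f S` over a random `S` with distribution `p`, conditioned on `e ∈ S`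
(zero if `e ∈ S` has probability zero). -/
noncomputable def meanGivenMem (p f : Finset E → ℝ) (e : E) : ℝ :=
  (∑ S with e ∈ S, p S * f S) / marginal p e

variable {𝒮 𝒯 : Set (Finset E)} {y : E → ℝ} {p q : Finset E → ℝ} {A : Finset E}

theorem exists_mem_le_meanGivenMem (hp : ∀ S, 0 ≤ p S) (f : Finset E → ℝ) {e : E}
    (he : marginal p e ≠ 0) : ∃ S, e ∈ S ∧ p S ≠ 0 ∧ f S ≤ meanGivenMem p f e := by
  obtain ⟨S, hS, hS'⟩ := exists_le_of_sum_mul_le (s := {S | e ∈ S}) (f := f)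
    (fun S _ => hp S) (exists_ne_zero_of_sum_ne_zero he)
    (M := meanGivenMem p f e) (mul_div_cancel₀ _ he).ge
  exact ⟨S, by simpa using hS, hS'⟩

theorem marginal_mul_meanGivenMem (hp : ∀ S, 0 ≤ p S) (f : Finset E → ℝ) (e : E) :
    marginal p e * meanGivenMem p f e = ∑ S with e ∈ S, p S * f S := by
  rcases eq_or_ne (marginal p e) 0 with h | h
  · have := (sum_eq_zero_iff_of_nonneg fun S _ => hp S).1 h
    rw [h, zero_mul, sum_eq_zero fun S hS => by rw [this S hS, zero_mul]]
  · exact mul_div_cancel₀ _ h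

theorem sum_marginal_mul_meanGivenMem (hp : ∀ S, 0 ≤ p S)
    (hA : ∀ S, p S ≠ 0 → (S ∩ A).card = 1) (f : Finset E → ℝ) :
    ∑ e ∈ A, marginal p e * meanGivenMem p f e = ∑ S, p S * f S := by
  simp only [marginal_mul_meanGivenMem hp, sum_filter]
  rw [sum_comm]
  refine sum_congr rfl fun S _ => ?_
  rcases eq_or_ne (p S) 0 with h | h
  · simp [h]
  · simp [inter_comm A, hA S h]

theorem DominatedDistribution.tight (hp : DominatedDistribution 𝒮 y p) (hA : ∑ e ∈ A, y e = 1)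
    (hmeet : ∀ S ∈ 𝒮, (S ∩ A).Nonempty) :
    (∀ S, p S ≠ 0 → (S ∩ A).card = 1) ∧ ∀ e ∈ A, marginal p e = y e := by
  have hle : ∀ S, p S ≤ p S * (S ∩ A).card := fun S => by
    rcases eq_or_ne (p S) 0 with h | h
    · simp [h]
    · have := (hmeet S (hp.mem_of_ne_zero S h)).card_pos
      exact le_mul_of_one_le_right (hp.nonneg S) (by exact_mod_cast this)
  have hlower := sum_le_sum fun S (_ : S ∈ univ) => hle S
  have hupper := sum_le_sum fun e (_ : e ∈ A) => hp.marginal_le e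
  have hsum := sum_marginal p A
  have hone := hp.sum_eq_one
  refine ⟨fun S hS => ?_, (sum_eq_sum_iff_of_le fun e _ => hp.marginal_le e).1 (by linarith)⟩
  have := (sum_eq_sum_iff_of_le fun S _ => hle S).1 (by linarith) S (mem_univ S)
  exact_mod_cast (mul_left_cancel₀ hS ((mul_one _).trans this)).symm

theorem exists_inter_eq_singleton (hp : DominatedDistribution 𝒮 y p)
    (hq : DominatedDistribution 𝒯 y q) (hA : ∑ e ∈ A, y e = 1)
    (h𝒮 : ∀ S ∈ 𝒮, (S ∩ A).Nonempty) (h𝒯 : ∀ S ∈ 𝒯, (S ∩ A).Nonempty)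
    {f g : Finset E → ℝ} {M : ℝ} (h : ∑ S, p S * f S + ∑ S, q S * g S ≤ M) :
    ∃ J ∈ 𝒮, ∃ K ∈ 𝒯, ∃ e, J ∩ A = {e} ∧ K ∩ A = {e} ∧ f J + g K ≤ M := by
  obtain ⟨hpA, hpy⟩ := hp.tight hA h𝒮
  obtain ⟨hqA, hqy⟩ := hq.tight hA h𝒯
  obtain ⟨e, heA, hye, hle⟩ := exists_le_of_sum_mul_le (s := A) (p := y) (M := M)
    (f := fun e => meanGivenMem p f e + meanGivenMem q g e)
    (fun e he => hpy e he ▸ sum_nonneg fun S _ => hp.nonneg S)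
    (exists_ne_zero_of_sum_ne_zero (by simp [hA])) (by
      rw [← sum_marginal_mul_meanGivenMem hp.nonneg hpA,
        ← sum_marginal_mul_meanGivenMem hq.nonneg hqA] at h
      rw [hA, one_mul]
      refine le_of_eq_of_le ?_ h
      simp only [mul_add, sum_add_distrib]
      congr 1
      · exact sum_congr rfl fun e he => by rw [hpy e he]
      · exact sum_congr rfl fun e he => by rw [hqy e he])
  have singleton_of_mem : ∀ S : Finset E, (S ∩ A).card = 1 → e ∈ S → S ∩ A = {e} := by
    intro S hS he
    obtain ⟨g, hg⟩ := card_eq_one.1 hS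
    have : e ∈ S ∩ A := mem_inter.2 ⟨he, heA⟩
    rw [hg, mem_singleton] at this
    rw [hg, this]
  obtain ⟨J, heJ, hpJ, hJ⟩ := exists_mem_le_meanGivenMem hp.nonneg f (e := e) (by rwa [hpy e heA])
  obtain ⟨K, heK, hqK, hK⟩ := exists_mem_le_meanGivenMem hq.nonneg g (e := e) (by rwa [hqy e heA])
  exact ⟨J, hp.mem_of_ne_zero J hpJ, K, hq.mem_of_ne_zero K hqK, e,
    singleton_of_mem J (hpA J hpJ) heJ, singleton_of_mem K (hqA K hqK) heK, by linarith⟩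

end Gluing

section TightCut

/-- Both sides of the cut encoded by `w` contain at least two vertices. -/
def NontrivialSides {V : Type*} (w : V → ZMod 2) : Prop :=
  {v | w v = 1}.Nontrivial ∧ {v | w v = 0}.Nontrivial

/-- The edges with both ends in `{v | w v = 1}`. -/
noncomputable def insideEdges {V E : Type*} [Fintype E] (G : MultiGraph V E) (w : V → ZMod 2) :
    Finset E := {e | w (G.fst e) = 1 ∧ w (G.snd e) = 1}

theorem sum_coboundary_mul_eq_of_inter_cutOf_eq {V E : Type*} [Fintype E]
    {G : MultiGraph V E} {w₀ : V → ZMod 2} {J K : Finset E}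
    (hJK : J ∩ G.cutOf w₀ = K ∩ G.cutOf w₀) (w : V → ZMod 2) :
    ∑ e ∈ J ∩ (G.insideEdges w₀)ᶜ, G.coboundary (w * w₀) e =
      ∑ e ∈ K ∩ (G.insideEdges w₀)ᶜ, G.coboundary (w * w₀) e := by
  simp only [sum_coboundary, inter_assoc]
  congr 2
  ext e
  have he := congrArg (e ∈ ·) hJK
  simp only [mem_inter, mem_compl, eq_iff_iff, mem_cutOf_iff_ne, insideEdges, mem_filter,
    mem_univ, true_and, Pi.mul_apply] at he ⊢
  rcases zmodTwo_eq_zero_or_eq_one (w₀ (G.fst e)) with h1 | h1 <;>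
    rcases zmodTwo_eq_zero_or_eq_one (w₀ (G.snd e)) with h2 | h2 <;>
    rw [h1, h2] at he ⊢ <;> grind

variable {V : Type u} {E : Type v} [Fintype V] [Fintype E] {G : MultiGraph V E}
  {τ : V → ZMod 2} {y c : E → ℝ}

theorem IsJoin.glue {w₀ : V → ZMod 2} {J K : Finset E}
    (hJ : ∀ w, (∀ v, w₀ v = 1 → w v = 0) → ∑ e ∈ J, G.coboundary w e = τ ⬝ᵥ w)
    (hK : ∀ w, (∀ v, w₀ v = 0 → w v = 0) → ∑ e ∈ K, G.coboundary w e = τ ⬝ᵥ w)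
    (hJK : J ∩ G.cutOf w₀ = K ∩ G.cutOf w₀) :
    G.IsJoin τ (K ∩ G.insideEdges w₀ ∪ J ∩ (G.insideEdges w₀)ᶜ) := by
  have hdisj (A B : Finset E) :
      Disjoint (A ∩ G.insideEdges w₀) (B ∩ (G.insideEdges w₀)ᶜ) :=
    disjoint_compl_right.mono inter_subset_right inter_subset_right
  have hsplit (A : Finset E) (f : E → ZMod 2) : ∑ e ∈ A, f e =
      ∑ e ∈ A ∩ G.insideEdges w₀, f e + ∑ e ∈ A ∩ (G.insideEdges w₀)ᶜ, f e := by
    rw [← sum_union (hdisj A A), ← inter_union_distrib_left, union_compl, inter_univ]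
  have hout (w : V → ZMod 2) (A : Finset E) :
      ∑ e ∈ A ∩ G.insideEdges w₀, G.coboundary (w * (1 + w₀)) e = 0 := by
    refine sum_eq_zero fun e he => ?_
    simp only [insideEdges, mem_inter, mem_filter, mem_univ, true_and] at he
    simp [coboundary, he.2, CharTwo.add_self_eq_zero]
  intro w
  -- The first summand is constant on `{v | w₀ v = 0}` and the second one on `{v | w₀ v = 1}`.
  have hw : w = w * w₀ + w * (1 + w₀) := by
    funext v
    simp only [Pi.add_apply, Pi.mul_apply, Pi.one_apply]
    linear_combination -w v * CharTwo.add_self_eq_zero (w₀ v)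
  have h1 := hK (w * w₀) fun v hv => by simp [hv]
  have h2 := hJ (w * (1 + w₀)) fun v hv => by
    simp only [Pi.mul_apply, Pi.add_apply, Pi.one_apply, hv, CharTwo.add_self_eq_zero, mul_zero]
  rw [hsplit, ← sum_coboundary_mul_eq_of_inter_cutOf_eq hJK] at h1
  rw [hsplit, hout, zero_add] at h2
  conv_lhs => rw [hw]
  conv_rhs => rw [hw]
  rw [sum_union (hdisj K J), dotProduct_add, ← h1, ← h2]
  simp only [coboundary_add, sum_add_distrib, hout]
  ring

theorem exists_join_of_tight_nontrivialSides
    (ih : ∀ (V' : Type u) [Fintype V'], Fintype.card V' < Fintype.card V → EdmondsJohnson V' E)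
    (hy : G.JoinFeasible τ y) (hc : ∀ e, 0 ≤ c e) {w₀ : V → ZMod 2} (hw₀ : NontrivialSides w₀)
    (hodd : τ ⬝ᵥ w₀ = 1) (htight : ∑ e ∈ G.cutOf w₀, y e = 1) :
    ∃ J, G.IsJoin τ J ∧ ∑ e ∈ J, c e ≤ ∑ e, c e * y e := by
  obtain ⟨⟨a, ha, b, hb, hab⟩, a', ha', b', hb', hab'⟩ := hw₀
  obtain ⟨p, hp⟩ := exists_distribution_of_contract ih _ hab ha hb hy.nonneg
    fun w _ => hy.one_le_sum_cutOf w
  obtain ⟨q, hq⟩ := exists_distribution_of_contract ih _ hab' ha' hb' hy.nonneg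
    fun w _ => hy.one_le_sum_cutOf w
  have hmeet {J : Finset E} (hJ : ∑ e ∈ J, G.coboundary w₀ e = τ ⬝ᵥ w₀) :
      (J ∩ G.cutOf w₀).Nonempty := by
    rw [sum_coboundary, hodd, ZMod.natCast_eq_one_iff_odd] at hJ
    exact card_pos.1 hJ.pos
  let I := G.insideEdges w₀
  have hcost : ∑ S, p S * ∑ e ∈ S ∩ Iᶜ, c e + ∑ S, q S * ∑ e ∈ S ∩ I, c e ≤
      ∑ e, c e * y e := by
    have h1 := hp.sum_mul_sum_inter_le Iᶜ hc
    have h2 := hq.sum_mul_sum_inter_le I hc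
    have h3 := sum_compl_add_sum I fun e => c e * y e
    simp only [mul_comm (y _)] at h1 h2
    linarith
  obtain ⟨J, hJ, K, hK, e, hJe, hKe, hle⟩ := exists_inter_eq_singleton hp hq htight
    (fun J hJ => hmeet (hJ w₀ fun u hu => hu.trans ha.symm))
    (fun K hK => hmeet (hK w₀ fun u hu => hu.trans ha'.symm)) hcost
  refine ⟨_, IsJoin.glue (fun w hw => hJ w fun u hu => (hw u hu).trans (hw a ha).symm)
    (fun w hw => hK w fun u hu => (hw u hu).trans (hw a' ha').symm) (hJe.trans hKe.symm), ?_⟩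
  rw [sum_union (disjoint_compl_right.mono inter_subset_right inter_subset_right), add_comm]
  exact hle

end TightCut

section VertexCut

variable {V E : Type*} (G : MultiGraph V E)

/-- The unordered pair of ends of an edge. -/
def ends (e : E) : Sym2 V := s(G.fst e, G.snd e)

variable {G} in
theorem coboundary_of_ends {e : E} {a b : V} (h : G.ends e = s(a, b)) (w : V → ZMod 2) :
    G.coboundary w e = w a + w b := by
  rcases Sym2.eq_iff.1 h with ⟨h1, h2⟩ | ⟨h1, h2⟩
  · rw [coboundary, h1, h2]
  · rw [coboundary, h1, h2, add_comm]

variable [Fintype E]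

/-- The cut `δ({v})`. -/
noncomputable abbrev vertexCut (v : V) : Finset E := G.cutOf (Pi.single v 1)

variable {G}

theorem mem_vertexCut {e : E} {a b : V} (h : G.ends e = s(a, b)) (hab : a ≠ b) (v : V) :
    e ∈ G.vertexCut v ↔ v = a ∨ v = b := by
  rw [mem_cutOf, coboundary_of_ends h, zmodTwo_add_eq_one_iff_ne, Pi.single_apply, Pi.single_apply]
  grind

theorem exists_ends_of_mem_vertexCut {e : E} {v : V} (h : e ∈ G.vertexCut v) :
    ∃ a ≠ v, G.ends e = s(v, a) := by
  rw [mem_cutOf_iff_ne, Pi.single_apply, Pi.single_apply] at h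
  by_cases h1 : G.fst e = v
  · exact ⟨G.snd e, fun h2 => by simp [h1, h2] at h, by rw [ends, h1]⟩
  · exact ⟨G.fst e, h1, by rw [ends, Sym2.eq_swap, show G.snd e = v by by_contra h2; simp_all]⟩

theorem eq_single_or_eq_one_add_single {w : V → ZMod 2} (hw : ¬NontrivialSides w)
    (hne : (G.cutOf w).Nonempty) : ∃ v, w = Pi.single v 1 ∨ w = 1 + Pi.single v 1 := by
  obtain ⟨e, he⟩ := hne
  rw [mem_cutOf_iff_ne] at he
  have hvalue (i : ZMod 2) : ∃ v, w v = i := by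
    have h : w (G.fst e) = i ∨ w (G.snd e) = i := by
      revert he
      generalize w (G.fst e) = a
      generalize w (G.snd e) = b
      revert a b i; decide
    exact h.elim (⟨_, ·⟩) (⟨_, ·⟩)
  rw [NontrivialSides, not_and_or, Set.not_nontrivial_iff, Set.not_nontrivial_iff] at hw
  rcases hw with hw | hw
  · obtain ⟨v, hv⟩ := hvalue 1
    refine ⟨v, Or.inl (funext fun u => ?_)⟩
    rcases eq_or_ne u v with rfl | hu
    · rw [hv, Pi.single_eq_same]
    · rw [Pi.single_eq_of_ne hu, ← zmodTwo_ne_one_iff]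
      exact fun h => hu (hw h hv)
  · obtain ⟨v, hv⟩ := hvalue 0
    refine ⟨v, Or.inr (funext fun u => ?_)⟩
    rcases eq_or_ne u v with rfl | hu
    · rw [hv, Pi.add_apply, Pi.one_apply, Pi.single_eq_same, CharTwo.add_self_eq_zero]
    · rw [Pi.add_apply, Pi.one_apply, Pi.single_eq_of_ne hu, add_zero, ← zmodTwo_ne_zero_iff]
      exact fun h => hu (hw h hv)

end VertexCut

section UniqueEdge

variable {E : Type*} [Fintype E]

theorem DominatedDistribution.notMem_of_eq_zero {𝒮 : Set (Finset E)} {x : E → ℝ}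
    {p : Finset E → ℝ} (hp : DominatedDistribution 𝒮 x p) {S : Finset E} (hS : p S ≠ 0) {e : E}
    (he : x e = 0) : e ∉ S := fun heS =>
  hS <| (hp.nonneg S).antisymm' <| he ▸ (hp.marginal_le e).trans' <|
    single_le_sum (fun S _ => hp.nonneg S) (mem_filter.2 ⟨mem_univ S, heS⟩)

/-- The support of a vector of edge values. -/
noncomputable def supp (y : E → ℝ) : Finset E := {e | y e ≠ 0}

theorem mem_supp {y : E → ℝ} {e : E} : e ∈ supp y ↔ y e ≠ 0 := by simp [supp]

theorem sum_inter_supp (A : Finset E) (y : E → ℝ) : ∑ e ∈ A ∩ supp y, y e = ∑ e ∈ A, y e :=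
  sum_subset inter_subset_left fun e he h => by
    by_contra h0
    exact h (mem_inter.2 ⟨he, mem_supp.2 h0⟩)

end UniqueEdge

section JoinReductions

variable {V : Type u} {E : Type v} [Fintype V] [Fintype E] {G : MultiGraph V E}
  {τ : V → ZMod 2} {y c : E → ℝ}

/-- A labelling separating `t` from `v` becomes constant on `{t, v}` after flipping its value
at `t`. -/
theorem IsJoin.insert_of_contract {t v : V} (htv : v ≠ t) (hτ : τ t = 1) {e₀ : E}
    (he₀ : G.ends e₀ = s(t, v)) {J : Finset E} (hJt : Disjoint J (G.vertexCut t))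
    (hJ : ∀ w : V → ZMod 2, w v = w t → ∑ e ∈ J, G.coboundary w e = τ ⬝ᵥ w) :
    G.IsJoin τ (insert e₀ J) := by
  have he₀t : e₀ ∈ G.vertexCut t := (mem_vertexCut he₀ htv.symm t).2 (Or.inl rfl)
  have he₀J : e₀ ∉ J := fun h => disjoint_left.1 hJt h he₀t
  have hconst (w : V → ZMod 2) (hw : w v = w t) :
      ∑ e ∈ insert e₀ J, G.coboundary w e = τ ⬝ᵥ w := by
    rw [sum_insert he₀J, coboundary_of_ends he₀, hw, CharTwo.add_self_eq_zero, zero_add, hJ w hw]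
  have hsingle : ∑ e ∈ insert e₀ J, G.coboundary (Pi.single t 1) e = τ ⬝ᵥ Pi.single t 1 := by
    rw [sum_insert he₀J, mem_cutOf.1 he₀t, dotProduct_single, hτ, mul_one,
      sum_eq_zero fun e he => notMem_cutOf.1 (disjoint_left.1 hJt he), add_zero]
  intro w
  by_cases hw : w v = w t
  · exact hconst w hw
  · have hflip := hconst (w + Pi.single t 1) (by
      rw [Pi.add_apply, Pi.add_apply, Pi.single_eq_same, Pi.single_eq_of_ne htv]
      revert hw; generalize w t = a; generalize w v = b; revert a b; decide)
    simp only [coboundary_add, sum_add_distrib, dotProduct_add, hsingle] at hflip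
    exact add_right_cancel hflip

theorem exists_join_of_tight_unique_edge
    (ih : ∀ (V' : Type u) [Fintype V'], Fintype.card V' < Fintype.card V → EdmondsJohnson V' E)
    (hy : G.JoinFeasible τ y) (hc : ∀ e, 0 ≤ c e) {t : V} (hτ : τ t = 1)
    (htight : ∑ e ∈ G.vertexCut t, y e = 1) (hcard : (G.vertexCut t ∩ supp y).card = 1) :
    ∃ J, G.IsJoin τ J ∧ ∑ e ∈ J, c e ≤ ∑ e, c e * y e := by
  obtain ⟨e₀, he₀⟩ := card_eq_one.1 hcard
  have hye₀ : y e₀ = 1 := by rw [← htight, ← sum_inter_supp, he₀, sum_singleton]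
  have he₀t : e₀ ∈ G.vertexCut t := (mem_inter.1 (he₀ ▸ mem_singleton_self e₀)).1
  obtain ⟨v, hvt, hends⟩ := exists_ends_of_mem_vertexCut he₀t
  let y' := Function.update y e₀ 0
  have hy' {e : E} (he : e ≠ e₀) : y' e = y e := Function.update_of_ne he _ _
  have hy'₀ : y' e₀ = 0 := Function.update_self ..
  obtain ⟨p, hp⟩ := exists_distribution_of_contract (G := G) (τ := τ) (y := y') ih {t, v}
    hvt.symm (by simp) (by simp) (fun e => by
      rcases eq_or_ne e e₀ with rfl | he
      · exact hy'₀.ge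
      · exact hy' he ▸ hy.nonneg e)
    (fun w hw hodd => (hy.one_le_sum_cutOf w hodd).trans_eq <| sum_congr rfl fun e he => by
      refine (hy' ?_).symm
      rintro rfl
      rw [mem_cutOf, coboundary_of_ends hends, hw v (by simp), CharTwo.add_self_eq_zero] at he
      exact zero_ne_one he)
  obtain ⟨J, hpJ, hcost⟩ := hp.exists_le_of_sum_mul_le (hp.sum_mul_sum_le hc)
  have hJt : Disjoint J (G.vertexCut t) := disjoint_left.2 fun e heJ het => by
    refine hp.notMem_of_eq_zero hpJ ?_ heJ
    rcases eq_or_ne e e₀ with rfl | he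
    · exact hy'₀
    · by_contra h
      exact he (mem_singleton.1 (he₀ ▸ mem_inter.2 ⟨het, mem_supp.2 (hy' he ▸ h)⟩))
  refine ⟨insert e₀ J, IsJoin.insert_of_contract hvt hτ hends hJt fun w hw =>
    hp.mem_of_ne_zero J hpJ w (by simp [hw]), ?_⟩
  rw [sum_insert fun h => disjoint_left.1 hJt h he₀t,
    ← add_sum_erase univ (fun e => c e * y e) (mem_univ e₀), hye₀, mul_one]
  rw [← add_sum_erase univ _ (mem_univ e₀), hy'₀, zero_mul, zero_add] at hcost
  refine add_le_add_right (hcost.trans_eq (sum_congr rfl fun e he => ?_)) _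
  rw [hy' (ne_of_mem_erase he), mul_comm]

theorem JoinFeasible.dotProduct_one (hy : G.JoinFeasible τ y) : τ ⬝ᵥ 1 = 0 := by
  refine zmodTwo_ne_one_iff.1 fun h => ?_
  have hempty : G.cutOf 1 = ∅ := eq_empty_of_forall_notMem fun e => by simp [mem_cutOf_iff_ne]
  have := hy.one_le_sum_cutOf 1 h
  rw [hempty, sum_empty] at this
  linarith

theorem exists_cutOf_eq_vertexCut (h1 : τ ⬝ᵥ 1 = 0) {w : V → ZMod 2} (hodd : τ ⬝ᵥ w = 1)
    (hw : ¬NontrivialSides w) (hne : (G.cutOf w).Nonempty) :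
    ∃ v, τ v = 1 ∧ G.cutOf w = G.vertexCut v := by
  obtain ⟨v, rfl | rfl⟩ := eq_single_or_eq_one_add_single hw hne
  · exact ⟨v, by rwa [dotProduct_single, mul_one] at hodd, rfl⟩
  · exact ⟨v, by rwa [dotProduct_add, h1, zero_add, dotProduct_single, mul_one] at hodd,
      G.cutOf_one_add _⟩

end JoinReductions

section TightCuts

variable {V E : Type*} [Fintype V] [Fintype E] (G : MultiGraph V E) (τ : V → ZMod 2) (y : E → ℝ)

/-- Some tight odd cut has at least two vertices on both of its sides. -/
def HasTightNontrivialCut : Prop :=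
  ∃ w, NontrivialSides w ∧ τ ⬝ᵥ w = 1 ∧ ∑ e ∈ G.cutOf w, y e = 1

/-- The terminals `t` whose cut `δ({t})` is tight. -/
noncomputable def tightTerminals : Finset V := {t | τ t = 1 ∧ ∑ e ∈ G.vertexCut t, y e = 1}

/-- The quantity that decreases along the Edmonds–Johnson descent: the number of support edges
and of vertices that are not tight terminals. -/
noncomputable def slack : ℕ := (supp y).card + (G.tightTerminals τ y)ᶜ.card

/-- The directions in which `y` can be moved without leaving its support or losing the tightness
of a terminal. -/
structure IsTightDirection (d : E → ℝ) : Prop where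
  eq_zero : ∀ e, y e = 0 → d e = 0
  sum_vertexCut : ∀ t ∈ G.tightTerminals τ y, ∑ e ∈ G.vertexCut t, d e = 0

variable {G τ y} {d c : E → ℝ}

theorem mem_tightTerminals {t : V} :
    t ∈ G.tightTerminals τ y ↔ τ t = 1 ∧ ∑ e ∈ G.vertexCut t, y e = 1 := by
  simp [tightTerminals]

theorem IsTightDirection.neg (hd : G.IsTightDirection τ y d) : G.IsTightDirection τ y (-d) where
  eq_zero e he := by rw [Pi.neg_apply, hd.eq_zero e he, neg_zero]
  sum_vertexCut t ht := by
    simp only [Pi.neg_apply, sum_neg_distrib, hd.sum_vertexCut t ht, neg_zero]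

theorem IsTightDirection.exists_descent (hd : G.IsTightDirection τ y d) (hne : d ≠ 0)
    (hc : ∀ e, 0 ≤ c e) :
    ∃ d', G.IsTightDirection τ y d' ∧ ∑ e, c e * d' e ≤ 0 ∧ ∃ e, d' e < 0 := by
  have hnegsum : ∑ e, c e * (-d) e = -∑ e, c e * d e := by simp
  by_cases hnonneg : ∀ e, 0 ≤ d e
  · obtain ⟨e, he⟩ := Function.ne_iff.1 hne
    exact ⟨-d, hd.neg, hnegsum ▸ neg_nonpos.2 (sum_nonneg fun e _ => mul_nonneg (hc e) (hnonneg e)),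
      e, neg_neg_of_pos ((hnonneg e).lt_of_ne' he)⟩
  push Not at hnonneg
  rcases le_total (∑ e, c e * d e) 0 with hle | hle
  · exact ⟨d, hd, hle, hnonneg⟩
  by_cases hnonpos : ∀ e, d e ≤ 0
  · exact ⟨d, hd, sum_nonpos fun e _ => mul_nonpos_of_nonneg_of_nonpos (hc e) (hnonpos e), hnonneg⟩
  push Not at hnonpos
  obtain ⟨e, he⟩ := hnonpos
  exact ⟨-d, hd.neg, hnegsum ▸ neg_nonpos.2 hle, e, neg_neg_of_pos he⟩

theorem exists_vertexCut_of_tight (h1 : τ ⬝ᵥ 1 = 0) (hA : ¬G.HasTightNontrivialCut τ y)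
    {w : V → ZMod 2} (hodd : τ ⬝ᵥ w = 1) (htight : ∑ e ∈ G.cutOf w, y e = 1) :
    ∃ v ∈ G.tightTerminals τ y, G.cutOf w = G.vertexCut v := by
  obtain ⟨v, hv, hcut⟩ := exists_cutOf_eq_vertexCut h1 hodd (fun h => hA ⟨w, h, hodd, htight⟩)
    (nonempty_of_sum_ne_zero (htight ▸ one_ne_zero))
  exact ⟨v, mem_tightTerminals.2 ⟨hv, hcut ▸ htight⟩, hcut⟩

theorem IsTightDirection.slack_lt (hd : G.IsTightDirection τ y d) {ε : ℝ}
    (hnew : (∃ e, y e ≠ 0 ∧ (y + ε • d) e = 0) ∨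
      ∃ v ∉ G.tightTerminals τ y, v ∈ G.tightTerminals τ (y + ε • d)) :
    G.slack τ (y + ε • d) < G.slack τ y := by
  have hsupp : supp (y + ε • d) ⊆ supp y := fun e he => mem_supp.2 fun h =>
    mem_supp.1 he (by simp [h, hd.eq_zero e h])
  have htight : G.tightTerminals τ y ⊆ G.tightTerminals τ (y + ε • d) := fun t ht => by
    rw [mem_tightTerminals, sum_add_smul, hd.sum_vertexCut t ht, mul_zero, add_zero]
    exact mem_tightTerminals.1 ht
  rcases hnew with ⟨e, hye, he⟩ | ⟨v, hv, hv'⟩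
  · exact add_lt_add_of_lt_of_le (card_lt_card <| (ssubset_iff_of_subset hsupp).2
      ⟨e, mem_supp.2 hye, fun h => mem_supp.1 h he⟩) (card_le_card (compl_subset_compl.2 htight))
  · exact add_lt_add_of_le_of_lt (card_le_card hsupp) (card_lt_card <| compl_ssubset_compl.2 <|
      (ssubset_iff_of_subset htight).2 ⟨v, hv', hv⟩)

/-- Ratio test: move along `d` until an edge leaves the support or an odd cut becomes tight. -/
theorem JoinFeasible.exists_add_smul (hy : G.JoinFeasible τ y) (hA : ¬G.HasTightNontrivialCut τ y)
    (hd : G.IsTightDirection τ y d) (hneg : ∃ e, d e < 0) :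
    ∃ ε > (0 : ℝ), G.JoinFeasible τ (y + ε • d) ∧
      (G.HasTightNontrivialCut τ (y + ε • d) ∨ G.slack τ (y + ε • d) < G.slack τ y) := by
  obtain ⟨ε, hε, hnonneg, i, hi, hi'⟩ := exists_add_mul_nonneg_of_exists_neg
    (s := Sum.elim y fun w : {w : V → ZMod 2 // τ ⬝ᵥ w = 1} => ∑ e ∈ G.cutOf w.1, y e - 1)
    (a := Sum.elim d fun w => ∑ e ∈ G.cutOf w.1, d e)
    (by rintro (e | ⟨w, hw⟩)
        · exact hy.nonneg e
        · exact sub_nonneg.2 (hy.one_le_sum_cutOf w hw))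
    (by rintro (e | ⟨w, hw⟩) h
        · exact (hd.eq_zero e h).ge
        · obtain ⟨v, hv, hcut⟩ :=
            exists_vertexCut_of_tight hy.dotProduct_one hA hw (sub_eq_zero.1 h)
          exact (hcut ▸ hd.sum_vertexCut v hv).ge)
    (hneg.imp' Sum.inl fun _ h => h)
  have hy' : G.JoinFeasible τ (y + ε • d) := ⟨fun e => hnonneg (Sum.inl e), fun w hw => by
    have := hnonneg (Sum.inr ⟨w, hw⟩)
    rw [sum_add_smul]
    simp only [Sum.elim_inr] at this
    linarith⟩
  refine ⟨ε, hε, hy', or_iff_not_imp_left.2 fun hA' => hd.slack_lt ?_⟩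
  rcases i with e | ⟨w, hw⟩
  · exact Or.inl ⟨e, hi, hi'⟩
  · simp only [Sum.elim_inr] at hi hi'
    obtain ⟨v, hv, hcut⟩ := exists_vertexCut_of_tight hy.dotProduct_one hA' hw (by
      rw [sum_add_smul]; linarith)
    exact Or.inr ⟨v, fun hv' => hi (by rw [hcut, (mem_tightTerminals.1 hv').2, sub_self]), hv⟩

end TightCuts

section Incidence

variable {V E : Type*} [Fintype E] {G : MultiGraph V E}

theorem filter_mem_vertexCut_of_ends {R : Finset V} {e : E} {a b : V} (hab : a ≠ b)
    (he : G.ends e = s(a, b)) (ha : a ∈ R) (hb : b ∈ R) :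
    ({t ∈ R | e ∈ G.vertexCut t} : Finset V) = {a, b} := by
  ext t
  rw [mem_filter, mem_vertexCut he hab, mem_insert, mem_singleton]
  exact and_iff_right_of_imp (by rintro (rfl | rfl) <;> assumption)

theorem filter_mem_vertexCut_subset (R : Finset V) (e : E) :
    ({t ∈ R | e ∈ G.vertexCut t} : Finset V) ⊆ {G.fst e, G.snd e} := fun t ht => by
  obtain ⟨a, -, ha⟩ := exists_ends_of_mem_vertexCut (mem_filter.1 ht).2
  rcases Sym2.eq_iff.1 ha with h | h <;> simp [h.1, h.2]

/-- Counting incidences between `S` and `R` in two ways, all inequalities are tight. -/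
theorem two_regular_of_card_le {R : Finset V} {S : Finset E} (hcard : S.card ≤ R.card)
    (hdeg : ∀ t ∈ R, 2 ≤ (G.vertexCut t ∩ S).card) :
    (∀ t ∈ R, (G.vertexCut t ∩ S).card = 2) ∧
      ∀ e ∈ S, ∃ a ∈ R, ∃ b ∈ R, a ≠ b ∧ G.ends e = s(a, b) := by
  have hle (e : E) (_ : e ∈ S) : ({t ∈ R | e ∈ G.vertexCut t} : Finset V).card ≤ 2 :=
    (card_le_card (filter_mem_vertexCut_subset R e)).trans card_le_two
  have hcount : ∑ t ∈ R, (G.vertexCut t ∩ S).card =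
      ∑ e ∈ S, ({t ∈ R | e ∈ G.vertexCut t} : Finset V).card := by
    refine Eq.trans (sum_congr rfl fun t _ => ?_)
      (sum_card_bipartiteAbove_eq_sum_card_bipartiteBelow fun t e => e ∈ G.vertexCut t)
    rw [bipartiteAbove, filter_mem_eq_inter, inter_comm]
  have hlower := sum_le_sum hdeg
  have hupper := sum_le_sum hle
  rw [sum_const, smul_eq_mul] at hlower hupper
  refine ⟨fun t ht => ?_, fun e he => ?_⟩
  · refine ((sum_eq_sum_iff_of_le hdeg).1 ?_ t ht).symm
    rw [sum_const, smul_eq_mul]; omega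
  · have h2 := (sum_eq_sum_iff_of_le hle).1 (by rw [sum_const, smul_eq_mul]; omega) e he
    have hends := eq_of_subset_of_card_le (filter_mem_vertexCut_subset (G := G) R e)
      (card_le_two.trans h2.ge)
    have hmem (t : V) (ht : t ∈ ({G.fst e, G.snd e} : Finset V)) : t ∈ R :=
      (mem_filter.1 (hends.symm ▸ ht)).1
    refine ⟨G.fst e, hmem _ (by simp), G.snd e, hmem _ (by simp), fun h => ?_, rfl⟩
    rw [hends, h, pair_eq_singleton, card_singleton] at h2
    exact absurd h2 (by decide)

theorem sum_sum_filter_mem_vertexCut {R : Finset V} {S : Finset E}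
    (hdeg : ∀ t ∈ R, (G.vertexCut t ∩ S).card = 2) (f : V → ℝ) :
    ∑ e ∈ S, ∑ t ∈ R with e ∈ G.vertexCut t, f t = 2 * ∑ t ∈ R, f t := by
  simp only [sum_filter, mul_sum]
  rw [sum_comm]
  refine sum_congr rfl fun t ht => ?_
  rw [sum_ite_mem, sum_const, inter_comm, hdeg t ht, nsmul_eq_mul, Nat.cast_ofNat]

section Potential

variable {R : Finset V} {S : Finset E} {s : V → ℝ} {e₀ : E} {u v : V}
  (hdeg : ∀ t ∈ R, (G.vertexCut t ∩ S).card = 2)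
  (hends : ∀ e ∈ S, ∃ a ∈ R, ∃ b ∈ R, a ≠ b ∧ G.ends e = s(a, b))
  (hs : ∀ e ∈ S, ∑ t ∈ R with e ∈ G.vertexCut t, s t = if e = e₀ then 1 else 0)
  (he₀ : e₀ ∈ S) (hu : u ∈ R) (hv : v ∈ R) (huv : u ≠ v) (hends₀ : G.ends e₀ = s(u, v))

include hends hs in
theorem exists_ends_eq_neg_of_potential {e : E} (he : e ∈ S) (hne : e ≠ e₀) :
    ∃ a ∈ R, ∃ b ∈ R, a ≠ b ∧ G.ends e = s(a, b) ∧ s a = -s b := by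
  obtain ⟨a, ha, b, hb, hab, heab⟩ := hends e he
  refine ⟨a, ha, b, hb, hab, heab, eq_neg_of_add_eq_zero_left ?_⟩
  rw [← sum_pair hab, ← filter_mem_vertexCut_of_ends hab heab ha hb, hs e he, if_neg hne]

include hs he₀ hu hv huv hends₀ in
theorem add_eq_one_of_potential : s u + s v = 1 := by
  rw [← sum_pair huv, ← filter_mem_vertexCut_of_ends huv hends₀ hu hv, hs e₀ he₀, if_pos rfl]

include hdeg hends hs he₀ hu hv huv hends₀ in
theorem two_mul_sum_level_set (c : ℝ) :
    2 * ∑ t ∈ R with |s t| = c, s t =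
      (if |s u| = c then s u else 0) + (if |s v| = c then s v else 0) := by
  rw [sum_filter, ← sum_sum_filter_mem_vertexCut hdeg,
    sum_eq_single_of_mem e₀ he₀ fun e he hne => ?_,
    filter_mem_vertexCut_of_ends huv hends₀ hu hv, sum_pair huv]
  obtain ⟨a, ha, b, hb, hab, heab, hsab⟩ := exists_ends_eq_neg_of_potential hends hs he hne
  rw [filter_mem_vertexCut_of_ends hab heab ha hb, sum_pair hab, hsab, abs_neg]
  split_ifs <;> ring

include hdeg hends hs he₀ hu hv huv hends₀ in
/-- Otherwise the level set of `|s|` through `u` would have a sum of signs equal to `± 1 / 2`. -/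
theorem abs_eq_abs_of_potential (hsu : s u ≠ 0) : |s v| = |s u| := by
  by_contra hne
  have hlevel := two_mul_sum_level_set hdeg hends hs he₀ hu hv huv hends₀ |s u|
  obtain ⟨k, hk, -⟩ := exists_intCast_mul_of_abs_eq (A := {t ∈ R | |s t| = |s u|}) (s := s)
    fun t ht => (mem_filter.1 ht).2
  rw [hk, if_pos rfl, if_neg hne, add_zero] at hlevel
  have habs : |(2 * k : ℤ)| = 1 := by
    refine Int.cast_injective (α := ℝ) (mul_right_cancel₀ (abs_ne_zero.2 hsu) ?_)
    have := congrArg abs hlevel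
    rw [abs_mul, abs_mul, abs_abs, ← mul_assoc, ← abs_mul] at this
    push_cast
    rw [this, one_mul]
  rcases (abs_eq zero_le_one).1 habs with h | h <;> omega

include hdeg hends hs he₀ hu hv huv hends₀ in
theorem eq_half_of_potential : s u = 1 / 2 ∧ s v = 1 / 2 := by
  have hadd := add_eq_one_of_potential hs he₀ hu hv huv hends₀
  have habs : |s v| = |s u| := by
    by_cases hsu : s u = 0
    · exact (abs_eq_abs_of_potential hdeg hends hs he₀ hv hu huv.symm
        (hends₀.trans Sym2.eq_swap) (by linarith)).symm
    · exact abs_eq_abs_of_potential hdeg hends hs he₀ hu hv huv hends₀ hsu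
  rcases abs_eq_abs.1 habs with h | h <;> constructor <;> linarith

include hdeg hends hs he₀ hu hv huv hends₀ in
theorem card_level_set_half : ((#{t ∈ R | |s t| = 1 / 2} : ℕ) : ZMod 2) = 1 := by
  have hlevel := two_mul_sum_level_set hdeg hends hs he₀ hu hv huv hends₀ (1 / 2)
  obtain ⟨hsu, hsv⟩ := eq_half_of_potential hdeg hends hs he₀ hu hv huv hends₀
  obtain ⟨k, hk, hkcard⟩ := exists_intCast_mul_of_abs_eq (A := {t ∈ R | |s t| = 1 / 2}) (s := s)
    fun t ht => (mem_filter.1 ht).2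
  have hhalf : |(1 / 2 : ℝ)| = 1 / 2 := abs_of_pos one_half_pos
  rw [hk, hsu, hsv, if_pos hhalf] at hlevel
  have hk1 : k = 1 := by exact_mod_cast (show (k : ℝ) = 1 by linarith)
  rw [← hkcard, hk1, Int.cast_one]

end Potential

end Incidence

section Extreme

variable {V E : Type*} [Fintype V] [Fintype E] {G : MultiGraph V E} {τ : V → ZMod 2} {y : E → ℝ}

variable (G τ y) in
/-- The incidence matrix of tight terminals against support edges. -/
noncomputable def tightIncidence : Matrix (G.tightTerminals τ y) (supp y) ℝ :=
  .of fun t e => if e.1 ∈ G.vertexCut t.1 then 1 else 0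

open Matrix in
theorem tightIncidence_mulVec_injective (hK : ∀ d, G.IsTightDirection τ y d → d = 0) :
    Function.Injective (G.tightIncidence τ y).mulVecLin := by
  refine (injective_iff_map_eq_zero _).2 fun d hd => ?_
  let d' : E → ℝ := fun e => if he : e ∈ supp y then d ⟨e, he⟩ else 0
  have hd'₀ {e : E} (he : e ∉ supp y) : d' e = 0 := dif_neg he
  have hd'_sum (t : G.tightTerminals τ y) :
      ∑ e ∈ G.vertexCut t, d' e = (G.tightIncidence τ y *ᵥ d) t := calc
    _ = ∑ e ∈ supp y ∩ G.vertexCut t, d' e := (sum_subset inter_subset_right fun e he h =>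
      hd'₀ fun hs => h (mem_inter.2 ⟨hs, he⟩)).symm
    _ = ∑ e ∈ supp y, if e ∈ G.vertexCut t then d' e else 0 := (sum_ite_mem ..).symm
    _ = ∑ e : supp y, if e.1 ∈ G.vertexCut t then d' e else 0 := (sum_coe_sort (supp y) _).symm
    _ = _ := sum_congr rfl fun e _ => by simp [tightIncidence, d']
  have hd' : d' = 0 := hK d'
    ⟨fun e he => hd'₀ fun h => mem_supp.1 h he, fun t ht => (hd'_sum ⟨t, ht⟩).trans (congrFun hd _)⟩
  funext e
  simpa [d'] using congrFun hd' e.1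

theorem card_supp_le_card_tightTerminals (hK : ∀ d, G.IsTightDirection τ y d → d = 0) :
    (supp y).card ≤ (G.tightTerminals τ y).card := by
  simpa using LinearMap.finrank_le_finrank_of_injective (tightIncidence_mulVec_injective hK)

/-- The row of a left inverse of the incidence matrix that belongs to `e₀`. -/
theorem exists_potential (hK : ∀ d, G.IsTightDirection τ y d → d = 0) {e₀ : E} (he₀ : e₀ ∈ supp y) :
    ∃ s : V → ℝ, ∀ e ∈ supp y,
      ∑ t ∈ G.tightTerminals τ y with e ∈ G.vertexCut t, s t = if e = e₀ then 1 else 0 := by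
  obtain ⟨L, hL⟩ := LinearMap.exists_leftInverse_of_injective (G.tightIncidence τ y).mulVecLin
    (LinearMap.ker_eq_bot.2 (tightIncidence_mulVec_injective hK))
  let N := LinearMap.toMatrix' L
  have hN : N * G.tightIncidence τ y = 1 := by
    rw [← LinearMap.toMatrix'_id, ← hL, LinearMap.toMatrix'_comp, ← Matrix.toLin'_apply',
      LinearMap.toMatrix'_toLin']
  refine ⟨fun t => if ht : t ∈ G.tightTerminals τ y then N ⟨e₀, he₀⟩ ⟨t, ht⟩ else 0, fun e he => ?_⟩
  have hentry := congrFun₂ hN ⟨e₀, he₀⟩ ⟨e, he⟩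
  rw [Matrix.mul_apply, Matrix.one_apply] at hentry
  rw [sum_filter, ← sum_coe_sort]
  simpa [tightIncidence, eq_comm] using hentry

theorem JoinFeasible.supp_eq_empty (hy : G.JoinFeasible τ y)
    (hB : ∀ t ∈ G.tightTerminals τ y, (G.vertexCut t ∩ supp y).card ≠ 1)
    (hK : ∀ d, G.IsTightDirection τ y d → d = 0) : supp y = ∅ := by
  have htwo (t : V) (ht : t ∈ G.tightTerminals τ y) : 2 ≤ (G.vertexCut t ∩ supp y).card := by
    have hpos : (G.vertexCut t ∩ supp y).Nonempty := nonempty_of_sum_ne_zero (f := y) (by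
      rw [sum_inter_supp, (mem_tightTerminals.1 ht).2]; exact one_ne_zero)
    have := hpos.card_pos
    have := hB t ht
    omega
  obtain ⟨hdeg, hends⟩ := two_regular_of_card_le (card_supp_le_card_tightTerminals hK) htwo
  refine eq_empty_of_forall_notMem fun e₀ he₀ => ?_
  obtain ⟨s, hs⟩ := exists_potential hK he₀
  obtain ⟨u, hu, v, hv, huv, hends₀⟩ := hends e₀ he₀
  let W : Finset V := {t ∈ G.tightTerminals τ y | |s t| = 1 / 2}
  let w : V → ZMod 2 := fun t => if t ∈ W then 1 else 0
  have hodd : τ ⬝ᵥ w = 1 := by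
    rw [← card_level_set_half hdeg hends hs he₀ hu hv huv hends₀, dotProduct]
    simp only [w, mul_ite, mul_one, mul_zero, sum_ite_mem, univ_inter]
    rw [sum_congr rfl fun t ht => (mem_tightTerminals.1 (mem_filter.1 ht).1).1, sum_const,
      nsmul_one]
  have hcut : G.cutOf w ∩ supp y = ∅ := by
    refine eq_empty_of_forall_notMem fun e he => ?_
    rw [mem_inter, mem_cutOf] at he
    obtain ⟨a, ha, b, hb, heab, habs⟩ : ∃ a ∈ G.tightTerminals τ y, ∃ b ∈ G.tightTerminals τ y,
        G.ends e = s(a, b) ∧ |s a| = |s b| := by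
      by_cases hee₀ : e = e₀
      · obtain ⟨hsu, hsv⟩ := eq_half_of_potential hdeg hends hs he₀ hu hv huv hends₀
        exact ⟨u, hu, v, hv, hee₀ ▸ hends₀, by rw [hsu, hsv]⟩
      · obtain ⟨a, ha, b, hb, -, heab, hsab⟩ :=
          exists_ends_eq_neg_of_potential hends hs he.2 hee₀
        exact ⟨a, ha, b, hb, heab, by rw [hsab, abs_neg]⟩
    rw [coboundary_of_ends heab, zmodTwo_add_eq_one_iff_ne] at he
    exact he.1 (by simp [w, W, ha, hb, habs])
  have := hy.one_le_sum_cutOf w hodd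
  rw [← sum_inter_supp, hcut, sum_empty] at this
  linarith

theorem JoinFeasible.isJoin_empty (hy : G.JoinFeasible τ y) (hy₀ : ∀ e, y e = 0) :
    G.IsJoin τ ∅ := fun w => by
  rw [sum_empty, eq_comm, ← zmodTwo_ne_one_iff]
  intro hodd
  have := hy.one_le_sum_cutOf w hodd
  rw [sum_eq_zero fun e _ => hy₀ e] at this
  linarith

end Extreme

theorem edmondsJohnson (V : Type u) [Fintype V] (E : Type v) [Fintype E] : EdmondsJohnson V E := by
  induction hn : Fintype.card V using Nat.strong_induction_on generalizing V with
  | _ n ihV =>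
  subst hn
  have ih (V' : Type u) [Fintype V'] (h : Fintype.card V' < Fintype.card V) : EdmondsJohnson V' E :=
    ihV _ h V' rfl
  intro G τ y c hy hc
  induction hm : G.slack τ y using Nat.strong_induction_on generalizing y with
  | _ m ihy =>
  subst hm
  by_cases hA : G.HasTightNontrivialCut τ y
  · obtain ⟨w, hw, hodd, htight⟩ := hA
    exact exists_join_of_tight_nontrivialSides ih hy hc hw hodd htight
  by_cases hB : ∃ t ∈ G.tightTerminals τ y, (G.vertexCut t ∩ supp y).card = 1
  · obtain ⟨t, ht, hcard⟩ := hB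
    obtain ⟨hτ, htight⟩ := mem_tightTerminals.1 ht
    exact exists_join_of_tight_unique_edge ih hy hc hτ htight hcard
  by_cases hK : ∃ d, G.IsTightDirection τ y d ∧ d ≠ 0
  · obtain ⟨d₀, hd₀, hne⟩ := hK
    obtain ⟨d, hd, hcd, hneg⟩ := hd₀.exists_descent hne hc
    obtain ⟨ε, hε, hy', hcase⟩ := hy.exists_add_smul hA hd hneg
    suffices ∃ J, G.IsJoin τ J ∧ ∑ e ∈ J, c e ≤ ∑ e, c e * (y + ε • d) e by
      obtain ⟨J, hJ, hcost⟩ := this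
      refine ⟨J, hJ, hcost.trans ?_⟩
      have hsplit : ∑ e, c e * (y + ε • d) e = ∑ e, c e * y e + ε * ∑ e, c e * d e := by
        simp only [Pi.add_apply, Pi.smul_apply, smul_eq_mul, mul_add, sum_add_distrib, mul_sum,
          mul_left_comm]
      linarith [mul_nonpos_of_nonneg_of_nonpos hε.le hcd]
    rcases hcase with ⟨w, hw, hodd, htight⟩ | hlt
    · exact exists_join_of_tight_nontrivialSides ih hy' hc hw hodd htight
    · exact ihy _ hlt _ hy' rfl
  · push Not at hB hK
    have hy₀ (e : E) : y e = 0 := by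
      by_contra he
      exact notMem_empty e (hy.supp_eq_empty hB hK ▸ mem_supp.2 he)
    exact ⟨∅, hy.isJoin_empty hy₀, by simp [hy₀]⟩

section Connectivity

theorem connectedOn_iff {V E : Type*} {G : MultiGraph V E} {P : E → Prop} :
    G.ConnectedOn P ↔
      ∀ w : V → ZMod 2, (∀ e, P e → G.coboundary w e = 0) → ∀ a b, w a = w b := by
  constructor
  · intro h w hw a b
    induction h a b with
    | refl => rfl
    | tail _ hadj ih =>
      obtain ⟨e, he, ⟨rfl, rfl⟩ | ⟨rfl, rfl⟩⟩ := hadj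
      · rw [ih, G.coboundary_eq_zero_iff.1 (hw e he)]
      · rw [ih, G.coboundary_eq_zero_iff.1 (hw e he)]
  · intro h a b
    let w : V → ZMod 2 := fun v => if Relation.ReflTransGen (G.Adj P) a v then 1 else 0
    have hw : ∀ e, P e → G.coboundary w e = 0 := fun e he => by
      have : Relation.ReflTransGen (G.Adj P) a (G.fst e) ↔
          Relation.ReflTransGen (G.Adj P) a (G.snd e) :=
        ⟨fun h => h.tail ⟨e, he, .inl ⟨rfl, rfl⟩⟩, fun h => h.tail ⟨e, he, .inr ⟨rfl, rfl⟩⟩⟩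
      simp only [coboundary_eq_zero_iff, w, this]
    by_contra hb
    simpa [w, Relation.ReflTransGen.refl, hb] using h w hw a b

end Connectivity

section Partition

variable {V E : Type*} (G : MultiGraph V E) [Fintype E]

/-- The edges `δ(𝒲)` between different parts of the partition `𝒲` of `V` into the fibres of `φ`. -/
noncomputable def crossing {β : Type*} (φ : V → β) : Finset E := {e | φ (G.fst e) ≠ φ (G.snd e)}

variable {G}

theorem mem_crossing {β : Type*} {φ : V → β} {e : E} :
    e ∈ G.crossing φ ↔ φ (G.fst e) ≠ φ (G.snd e) := by
  simp [crossing]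

theorem crossing_zmodTwo (w : V → ZMod 2) : G.crossing w = G.cutOf w := by
  ext e
  rw [mem_crossing, mem_cutOf_iff_ne]

variable [Fintype V]

variable (G) in
/-- Membership in the dominant of the spanning tree polytope, as described by the inequalities
`x(δ(𝒲)) ≥ |𝒲| - 1`. -/
structure PartitionFeasible (x : E → ℝ) : Prop where
  nonneg : ∀ e, 0 ≤ x e
  card_parts_sub_one_le : ∀ W : Finpartition (univ : Finset V),
    (W.parts.card : ℝ) - 1 ≤ ∑ e ∈ G.partitionCut W, x e

theorem card_parts_ker {β : Type*} [DecidableEq β] (φ : V → β) :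
    (Finpartition.ofSetSetoid (Setoid.ker φ) univ).parts.card = (univ.image φ).card := by
  have himage : (Finpartition.ofSetSetoid (Setoid.ker φ) univ).parts =
      (univ.image φ).image fun z => ({b | z = φ b} : Finset V) := by
    rw [Finpartition.ofSetSetoid_parts, image_image]
    refine image_congr fun a _ => ?_
    ext b
    simp
  rw [himage, card_image_of_injOn]
  intro z hz z' _ hzz
  obtain ⟨a, -, rfl⟩ := mem_image.1 (mem_coe.1 hz)
  simpa [eq_comm] using Finset.ext_iff.1 hzz a

theorem partitionCut_ker {β : Type*} [DecidableEq β] (φ : V → β) :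
    G.partitionCut (Finpartition.ofSetSetoid (Setoid.ker φ) univ) = G.crossing φ := by
  ext e
  simp only [partitionCut, Finpartition.ofSetSetoid_parts, mem_filter, mem_univ, true_and,
    mem_image, forall_exists_index, forall_apply_eq_imp_iff, mem_crossing]
  exact ⟨fun h hφ => h (G.fst e) ⟨rfl, hφ⟩, fun hne a h => hne (h.1.symm.trans h.2)⟩

theorem PartitionFeasible.card_image_le {x : E → ℝ} (hx : G.PartitionFeasible x) {β : Type*}
    [DecidableEq β] (φ : V → β) : ((univ.image φ).card : ℝ) ≤ ∑ e ∈ G.crossing φ, x e + 1 := by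
  rw [← card_parts_ker, ← partitionCut_ker, ← sub_le_iff_le_add]
  exact hx.card_parts_sub_one_le _

theorem PartitionFeasible.one_le_sum_cutOf {x : E → ℝ} (hx : G.PartitionFeasible x)
    {w : V → ZMod 2} {a b : V} (hab : w a ≠ w b) : 1 ≤ ∑ e ∈ G.cutOf w, x e := by
  have hcard : (2 : ℝ) ≤ (univ.image w).card := by
    exact_mod_cast one_lt_card.2 ⟨w a, by simp, w b, by simp, hab⟩
  have := hx.card_image_le w
  rw [crossing_zmodTwo] at this
  linarith

end Partition

section Connectors

variable {V E : Type*} {G : MultiGraph V E}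

variable (G) in
/-- `S` becomes connected after contracting every fibre of `φ` to a vertex. -/
def ConnectsFibers (φ : V → V) (S : Finset E) : Prop :=
  ∀ w : V → ZMod 2, (∀ a b, φ a = φ b → w a = w b) → (∀ e ∈ S, G.coboundary w e = 0) →
    ∀ a b, w a = w b

theorem connectsFibers_insert {φ : V → V} {S : Finset E} {e₀ : E}
    (h : G.ConnectsFibers (fun v => if φ v = φ (G.snd e₀) then φ (G.fst e₀) else φ v) S) :
    G.ConnectsFibers φ (insert e₀ S) := by
  intro w hφ hS
  have he₀ : w (G.fst e₀) = w (G.snd e₀) :=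
    G.coboundary_eq_zero_iff.1 (hS e₀ (mem_insert_self e₀ S))
  refine h w (fun a b hab => ?_) fun e he => hS e (mem_insert_of_mem he)
  dsimp only at hab
  split_ifs at hab with ha hb hb
  · rw [hφ a _ ha, hφ b _ hb]
  · rw [hφ a _ ha, ← he₀, hφ _ _ hab]
  · rw [hφ b _ hb, ← he₀, hφ _ _ hab]
  · exact hφ a b hab

variable [Fintype V] [Fintype E] {x : E → ℝ}

theorem card_image_merge_lt {φ : V → V} {a b : V} (hab : φ a ≠ φ b) :
    (univ.image fun v => if φ v = φ b then φ a else φ v).card < (univ.image φ).card := by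
  have hsub : (univ.image fun v => if φ v = φ b then φ a else φ v) ⊆
      (univ.image φ).erase (φ b) := by
    intro z hz
    obtain ⟨v, -, rfl⟩ := mem_image.1 hz
    split_ifs with hv
    · simp [hab]
    · simp [hv]
  exact (card_le_card hsub).trans_lt (card_erase_lt_of_mem (mem_image_of_mem φ (mem_univ b)))

/-- Kruskal's algorithm: contract a cheapest edge `e₀` between different fibres and subtract its
weight from every edge between different fibres. -/
theorem PartitionFeasible.exists_connectsFibers (hx : G.PartitionFeasible x) (φ : V → V)
    {w : E → ℝ} (hw : ∀ e, 0 ≤ w e) :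
    ∃ S, G.ConnectsFibers φ S ∧ S.card ≤ (univ.image φ).card - 1 ∧
      ∑ e ∈ S, w e ≤ ∑ e, w e * x e := by
  induction hn : (univ.image φ).card using Nat.strong_induction_on generalizing φ w with
  | _ n ih =>
    subst hn
    have hx_crossing := hx.card_image_le φ
    obtain hcard | hcard := le_or_gt (univ.image φ).card 1
    · exact ⟨∅, fun w hφ _ a b => hφ a b (card_le_one.1 hcard _ (by simp) _ (by simp)), by simp,
        by simpa using sum_nonneg fun e _ => mul_nonneg (hw e) (hx.nonneg e)⟩
    have hne : (G.crossing φ).Nonempty := by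
      rw [nonempty_iff_ne_empty]
      intro h
      rw [h, sum_empty, zero_add, Nat.cast_le_one] at hx_crossing
      omega
    obtain ⟨e₀, he₀, hmin⟩ := exists_min_image _ w hne
    have hlt := card_image_merge_lt (mem_crossing.1 he₀)
    obtain ⟨S, hS, hScard, hSw⟩ := ih _ hlt _
      (w := fun e => w e - if e ∈ G.crossing φ then w e₀ else 0)
      (fun e => by split_ifs with he <;> simp [hw, hmin, he]) rfl
    have hScard' : (S.card : ℝ) + 1 ≤ ∑ e ∈ G.crossing φ, x e := by
      have : S.card + 2 ≤ (univ.image φ).card := by omega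
      have : (S.card : ℝ) + 2 ≤ (univ.image φ).card := by exact_mod_cast this
      linarith
    refine ⟨insert e₀ S, connectsFibers_insert hS, (card_insert_le e₀ S).trans (by omega), ?_⟩
    calc ∑ e ∈ insert e₀ S, w e
        ≤ w e₀ + ∑ e ∈ S, ((w e - if e ∈ G.crossing φ then w e₀ else 0) + w e₀) := by
          refine (sum_insert_le_add (hw e₀)).trans (add_le_add_right (sum_le_sum fun e _ => ?_) _)
          split_ifs <;> linarith [hw e₀]
      _ = ∑ e ∈ S, (w e - if e ∈ G.crossing φ then w e₀ else 0) + w e₀ * (S.card + 1) := by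
          rw [sum_add_distrib, sum_const, nsmul_eq_mul]; ring
      _ ≤ ∑ e, (w e - if e ∈ G.crossing φ then w e₀ else 0) * x e +
            w e₀ * ∑ e ∈ G.crossing φ, x e :=
          add_le_add hSw (mul_le_mul_of_nonneg_left hScard' (hw e₀))
      _ = ∑ e, w e * x e := by
          simp only [sub_mul, sum_sub_distrib, ite_mul, zero_mul, sum_ite_mem, univ_inter,
            mul_sum, sub_add_cancel]

theorem PartitionFeasible.exists_dominatedDistribution (hx : G.PartitionFeasible x) :
    ∃ p, DominatedDistribution {S | G.ConnectedOn (· ∈ S)} x p := by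
  refine MultiGraph.exists_dominatedDistribution fun w hw => ?_
  obtain ⟨S, hS, -, hle⟩ := hx.exists_connectsFibers id hw
  exact ⟨S, connectedOn_iff.2 fun w => hS w fun a b hab => congrArg w hab, hle⟩

end Connectors

section Boundary

variable {V E : Type*} (G : MultiGraph V E)

theorem coboundary_sum {ι : Type*} (A : Finset ι) (U : ι → V → ZMod 2) (e : E) :
    G.coboundary (∑ i ∈ A, U i) e = ∑ i ∈ A, G.coboundary (U i) e := by
  simp only [coboundary, Finset.sum_apply, sum_add_distrib]

variable [Fintype V]

/-- The `ZMod 2`-boundary of an edge set; it is the indicator vector of the odd-degree vertices. -/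
noncomputable def boundary (A : Finset E) (v : V) : ZMod 2 :=
  ∑ e ∈ A, G.coboundary (Pi.single v 1) e

theorem boundary_dotProduct (A : Finset E) (w : V → ZMod 2) :
    G.boundary A ⬝ᵥ w = ∑ e ∈ A, G.coboundary w e := by
  simp only [dotProduct, boundary, sum_mul]
  rw [sum_comm]
  refine sum_congr rfl fun e _ => ?_
  simp [coboundary, add_mul, sum_add_distrib, Pi.single_apply]

theorem boundary_dotProduct_one (A : Finset E) : G.boundary A ⬝ᵥ 1 = 0 := by
  rw [boundary_dotProduct]
  exact sum_eq_zero fun e _ => G.coboundary_eq_zero_iff.2 rfl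

/-- The vector over `ZMod 2` representing `T`: its pairing with a labelling `w` is the parity of
`|T ∩ {v | w v = 1}|`. -/
noncomputable def parityVec (T : Finset V) (v : V) : ZMod 2 := if v ∈ T then 1 else 0

theorem parityVec_dotProduct (T : Finset V) (w : V → ZMod 2) :
    parityVec T ⬝ᵥ w = (T ∩ univ.filter (w · = 1)).card := by
  have hw : ∀ v, parityVec T v * w v = if v ∈ T ∩ univ.filter (w · = 1) then 1 else 0 :=
    fun v => by
      obtain h | h := zmodTwo_eq_zero_or_eq_one (w v) <;> simp [parityVec, h]
  simp only [dotProduct, hw, sum_ite_mem, univ_inter, sum_const, nsmul_eq_mul, mul_one]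

theorem parityVec_dotProduct_one {T : Finset V} (hT : Even T.card) : parityVec T ⬝ᵥ 1 = 0 := by
  simpa [parityVec_dotProduct, ZMod.natCast_eq_zero_iff_even] using hT

theorem exists_ne_of_dotProduct_eq_one {τ w : V → ZMod 2} (hτ : τ ⬝ᵥ 1 = 0) (hw : τ ⬝ᵥ w = 1) :
    ∃ a b, w a ≠ w b := by
  by_contra! h
  obtain ⟨a⟩ : Nonempty V := by
    by_contra hV
    rw [not_nonempty_iff] at hV
    simp [dotProduct] at hw
  rw [show w = w a • 1 from funext fun b => by simp [h b a], dotProduct_smul, hτ, smul_zero] at hw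
  exact zero_ne_one hw

theorem oddVerts_eq_of_sum_coboundary {T : Finset V} {F : Multiset E}
    (h : ∀ v, (F.map (G.coboundary (Pi.single v 1))).sum = parityVec T v) : G.oddVerts F = T := by
  ext v
  have hdeg : (G.deg F v : ZMod 2) = (F.map (G.coboundary (Pi.single v 1))).sum := by
    rw [deg, Nat.cast_multiset_sum, Multiset.map_map]
    congr 1
    refine Multiset.map_congr rfl fun e _ => ?_
    simp [coboundary, Pi.single_apply]
  rw [oddVerts, mem_filter, ← ZMod.natCast_eq_one_iff_odd, hdeg, h, parityVec]
  simp

end Boundary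

section Spanning

variable {V E : Type*} {G : MultiGraph V E} {S : Finset E}

theorem coboundary_eq_of_connectedOn (hS : G.ConnectedOn (· ∈ S)) {w w' : V → ZMod 2}
    (h : ∀ s ∈ S, G.coboundary w s = G.coboundary w' s) (e : E) :
    G.coboundary w e = G.coboundary w' e := by
  have hconst := connectedOn_iff.1 hS (w + w') fun s hs => by
    rw [coboundary_add, h s hs, CharTwo.add_self_eq_zero]
  rw [← CharTwo.add_eq_zero, ← coboundary_add]
  exact G.coboundary_eq_zero_iff.2 (hconst _ _)

variable [Fintype E]

theorem cutOf_eq_of_inter_eq (hS : G.ConnectedOn (· ∈ S)) {w w' : V → ZMod 2}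
    (h : S ∩ G.cutOf w = S ∩ G.cutOf w') : G.cutOf w = G.cutOf w' := by
  have hcob := coboundary_eq_of_connectedOn hS (w := w) (w' := w') fun s hs => by
    have hmem : s ∈ G.cutOf w ↔ s ∈ G.cutOf w' := by
      simpa [hs] using Finset.ext_iff.1 h s
    by_cases hw : s ∈ G.cutOf w
    · rw [mem_cutOf.1 hw, mem_cutOf.1 (hmem.1 hw)]
    · rw [notMem_cutOf.1 hw, notMem_cutOf.1 (hmem.not.1 hw)]
  ext e
  rw [mem_cutOf, mem_cutOf, hcob]

theorem inter_cutOf_nonempty (hS : G.ConnectedOn (· ∈ S)) {w : V → ZMod 2} {a b : V}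
    (hab : w a ≠ w b) : (S ∩ G.cutOf w).Nonempty := by
  by_contra h
  refine hab (connectedOn_iff.1 hS w (fun e he => ?_) a b)
  rw [← notMem_cutOf]
  exact fun hw => h ⟨e, mem_inter.2 ⟨he, hw⟩⟩

variable {L : Finset E} {U : E → V → ZMod 2}

theorem mem_cutOf_iff_eq (hU : ∀ f ∈ L, S ∩ G.cutOf (U f) = {f}) {f s : E} (hf : f ∈ L)
    (hs : s ∈ S) : s ∈ G.cutOf (U f) ↔ s = f := by
  simpa [hs] using Finset.ext_iff.1 (hU f hf) s

/-- When `S` is a tree this is the expansion of a cut in the basis of fundamental cuts. -/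
theorem coboundary_eq_sum_of_inter_subset (hS : G.ConnectedOn (· ∈ S))
    (hU : ∀ f ∈ L, S ∩ G.cutOf (U f) = {f}) {w : V → ZMod 2} (hw : S ∩ G.cutOf w ⊆ L) (e : E) :
    G.coboundary w e = ∑ f ∈ S ∩ G.cutOf w, G.coboundary (U f) e := by
  rw [← coboundary_sum]
  refine coboundary_eq_of_connectedOn hS (fun s hs => ?_) e
  rw [coboundary_sum]
  have hzero : ∀ f ∈ S ∩ G.cutOf w, f ≠ s → G.coboundary (U f) s = 0 := fun f hf hfs => by
    rw [← notMem_cutOf, mem_cutOf_iff_eq hU (hw hf) hs]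
    exact hfs.symm
  by_cases hsw : s ∈ S ∩ G.cutOf w
  · rw [sum_eq_single_of_mem s hsw hzero, mem_cutOf.1 (mem_inter.1 hsw).2,
      mem_cutOf.1 ((mem_cutOf_iff_eq hU (hw hsw) hs).2 rfl)]
  · rw [sum_eq_zero fun f hf => hzero f hf (by rintro rfl; exact hsw hf), ← notMem_cutOf]
    exact fun h => hsw (mem_inter.2 ⟨hs, h⟩)

end Spanning

section Augmentation

variable {V E : Type*} [Fintype E] (G : MultiGraph V E) {S L J : Finset E}
  {U : E → V → ZMod 2} {m : E → E}

/-- The edges `f ∈ L` whose cut `U f` contains `e`. When `S` is a tree and `U f` is the fundamental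
cut of `f ∈ L ⊆ S`, these are the edges of `L` on the path in `S` between the endpoints of `e`. -/
noncomputable def fundamentalPath (L : Finset E) (U : E → V → ZMod 2) (e : E) : Finset E :=
  {f ∈ L | e ∈ G.cutOf (U f)}

variable {G} in
theorem mem_fundamentalPath {e f : E} :
    f ∈ G.fundamentalPath L U e ↔ f ∈ L ∧ e ∈ G.cutOf (U f) :=
  mem_filter

theorem card_fundamentalPath_le_one (hU : ∀ f ∈ L, S ∩ G.cutOf (U f) = {f}) {e : E}
    (he : e ∈ S) : (G.fundamentalPath L U e).card ≤ 1 := by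
  refine card_le_one.2 fun f hf g hg => ?_
  rw [mem_fundamentalPath] at hf hg
  rw [← (mem_cutOf_iff_eq hU hf.1 he).1 hf.2, (mem_cutOf_iff_eq hU hg.1 he).1 hg.2]

/-- Delete `L` from `S`, add `J`, and reconnect: for each `e ∈ J` the edges of `L` on the
fundamental path of `e`, except `m e`, return in two copies. -/
noncomputable def augmentation (S L J : Finset E) (U : E → V → ZMod 2) (m : E → E) : Multiset E :=
  (S \ L).val + J.val + 2 • ∑ e ∈ J, ((G.fundamentalPath L U e).erase (m e)).val

variable {G}

theorem mem_augmentation {f : E} :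
    f ∈ G.augmentation S L J U m ↔
      f ∈ S \ L ∨ f ∈ J ∨ ∃ e ∈ J, f ∈ (G.fundamentalPath L U e).erase (m e) := by
  simp only [augmentation, Multiset.mem_add, Multiset.mem_nsmul_of_ne_zero two_ne_zero,
    Multiset.mem_sum, mem_val, or_assoc]

theorem connectedOn_augmentation (hS : G.ConnectedOn (· ∈ S))
    (hU : ∀ f ∈ L, S ∩ G.cutOf (U f) = {f}) (hJ : ∀ f ∈ L, ∃ e ∈ J, e ∈ G.cutOf (U f)) :
    G.ConnectedOn (· ∈ G.augmentation S L J U m) := by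
  refine connectedOn_iff.2 fun w hw => connectedOn_iff.1 hS w fun f hfS => ?_
  have hcut : ∀ g ∈ G.cutOf w, g ∉ G.augmentation S L J U m := fun g hg hgF =>
    zero_ne_one ((hw g hgF).symm.trans (mem_cutOf.1 hg))
  have hsub : S ∩ G.cutOf w ⊆ L := fun g hg => by
    by_contra hgL
    rw [mem_inter] at hg
    exact hcut g hg.2 (mem_augmentation.2 (.inl (mem_sdiff.2 ⟨hg.1, hgL⟩)))
  rw [← notMem_cutOf]
  intro hfw
  have hf := mem_inter.2 ⟨hfS, hfw⟩
  obtain ⟨e, heJ, hef⟩ := hJ f (hsub hf)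
  have hunique : ∀ g ∈ S ∩ G.cutOf w, e ∈ G.cutOf (U g) → g = m e := fun g hg heg => by
    by_contra hgm
    refine hcut g (mem_inter.1 hg).2 (mem_augmentation.2 (.inr (.inr ⟨e, heJ, ?_⟩)))
    exact mem_erase.2 ⟨hgm, mem_fundamentalPath.2 ⟨hsub hg, heg⟩⟩
  have hcob := coboundary_eq_sum_of_inter_subset hS hU hsub e
  rw [hw e (mem_augmentation.2 (.inr (.inl heJ))), sum_eq_single_of_mem f hf, mem_cutOf.1 hef]
    at hcob
  · exact zero_ne_one hcob
  · intro g hg hgf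
    rw [← notMem_cutOf]
    exact fun heg => hgf ((hunique g hg heg).trans (hunique f hf hef).symm)

theorem sum_map_augmentation {R : Type*} [AddCommMonoid R] (h : E → R) :
    ((G.augmentation S L J U m).map h).sum = ∑ e ∈ S \ L, h e + ∑ e ∈ J, h e +
      2 • ∑ e ∈ J, ∑ f ∈ (G.fundamentalPath L U e).erase (m e), h f := by
  have hsum := map_sum (Multiset.sumAddMonoidHom.comp (Multiset.mapAddMonoidHom h))
    (fun e => ((G.fundamentalPath L U e).erase (m e)).val) J
  simp only [AddMonoidHom.comp_apply, Multiset.coe_sumAddMonoidHom,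
    Multiset.coe_mapAddMonoidHom] at hsum
  simp only [augmentation, Multiset.map_add, Multiset.sum_add, Multiset.map_nsmul,
    Multiset.sum_nsmul, hsum]
  rfl

theorem isTTour_augmentation [Fintype V] {T : Finset V} (hS : G.ConnectedOn (· ∈ S))
    (hU : ∀ f ∈ L, S ∩ G.cutOf (U f) = {f}) (hUodd : ∀ f ∈ L, parityVec T ⬝ᵥ U f = 1)
    (hJ : G.IsJoin (parityVec T + G.boundary (S \ L)) J) :
    G.IsTTour T (G.augmentation S L J U m) := by
  refine ⟨connectedOn_augmentation hS hU fun f hf => ?_,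
    oddVerts_eq_of_sum_coboundary G fun v => ?_⟩
  · have hodd : ∑ e ∈ J, G.coboundary (U f) e = 1 := by
      rw [hJ, add_dotProduct, hUodd f hf, boundary_dotProduct, sum_eq_zero, add_zero]
      intro s hs
      rw [mem_sdiff] at hs
      rw [← notMem_cutOf, mem_cutOf_iff_eq hU hf hs.1]
      rintro rfl
      exact hs.2 hf
    obtain ⟨e, he, hne⟩ := exists_ne_zero_of_sum_ne_zero (hodd.trans_ne one_ne_zero)
    exact ⟨e, he, mem_cutOf.2 (zmodTwo_ne_zero_iff.1 hne)⟩
  · rw [sum_map_augmentation, hJ, dotProduct_single, mul_one, two_nsmul,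
      CharTwo.add_self_eq_zero, add_zero, Pi.add_apply, boundary, add_comm (parityVec T v),
      ← add_assoc, CharTwo.add_self_eq_zero, zero_add]

end Augmentation

section Packing

variable {V E : Type*} [Fintype V] [Fintype E] {G : MultiGraph V E} {x : E → ℝ} {L : Finset E}
  {U : E → V → ZMod 2}

theorem card_add_one_le_card_image [Nonempty V]
    (hU : ∀ f ∈ L, ∀ g ∈ L, g ∈ G.cutOf (U f) ↔ g = f) :
    L.card + 1 ≤ (univ.image fun v => {f ∈ L | U f v = 1}).card := by
  induction L using Finset.induction_on with
  | empty => simp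
  | insert g L hg ih =>
    have herase : ∀ v, ({f ∈ insert g L | U f v = 1} : Finset E).erase g = {f ∈ L | U f v = 1} :=
      fun v => by rw [← filter_erase, erase_insert hg]
    have himage : (univ.image fun v => {f ∈ insert g L | U f v = 1}).image (·.erase g) =
        univ.image fun v => {f ∈ L | U f v = 1} := by
      rw [image_image]
      exact image_congr fun v _ => herase v
    have hlt : (univ.image fun v => {f ∈ L | U f v = 1}).card <
        (univ.image fun v => {f ∈ insert g L | U f v = 1}).card := by
      rw [← himage]
      refine card_image_le.lt_of_ne fun hcard => ?_
      have hends : ({f ∈ insert g L | U f (G.fst g) = 1} : Finset E) =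
          {f ∈ insert g L | U f (G.snd g) = 1} := by
        refine card_image_iff.1 hcard (by simp) (by simp) ?_
        rw [herase, herase]
        refine filter_congr fun f hf => ?_
        have hgf : g ∉ G.cutOf (U f) := fun h =>
          hg ((hU f (mem_insert_of_mem hf) g (mem_insert_self g L)).1 h ▸ hf)
        rw [G.coboundary_eq_zero_iff.1 (notMem_cutOf.1 hgf)]
      have hgg : U g (G.fst g) ≠ U g (G.snd g) := mem_cutOf_iff_ne.1
        ((hU g (mem_insert_self g L) g (mem_insert_self g L)).2 rfl)
      have hiff : U g (G.fst g) = 1 ↔ U g (G.snd g) = 1 := by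
        simpa using Finset.ext_iff.1 hends g
      rw [← zmodTwo_add_eq_one_iff_ne] at hgg
      obtain h | h := zmodTwo_eq_zero_or_eq_one (U g (G.fst g)) <;> simp_all
    rw [card_insert_of_notMem hg]
    have := ih fun f hf e he => hU f (mem_insert_of_mem hf) e (mem_insert_of_mem he)
    omega

theorem PartitionFeasible.card_le_sum_biUnion (hx : G.PartitionFeasible x)
    (hU : ∀ f ∈ L, ∀ g ∈ L, g ∈ G.cutOf (U f) ↔ g = f) :
    (L.card : ℝ) ≤ ∑ e ∈ L.biUnion fun f => G.cutOf (U f), x e := by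
  obtain rfl | ⟨g, -⟩ := L.eq_empty_or_nonempty
  · simp
  have : Nonempty V := ⟨G.fst g⟩
  have hcard : (L.card : ℝ) + 1 ≤ (univ.image fun v => {f ∈ L | U f v = 1}).card := by
    exact_mod_cast card_add_one_le_card_image hU
  have hcross : G.crossing (fun v => {f ∈ L | U f v = 1}) ⊆ L.biUnion fun f => G.cutOf (U f) := by
    intro e he
    contrapose! he
    simp only [mem_biUnion, not_exists, not_and, notMem_cutOf, coboundary_eq_zero_iff] at he
    rw [mem_crossing, not_not]
    exact filter_congr fun f hf => by rw [he f hf]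
  have := hx.card_image_le fun v => {f ∈ L | U f v = 1}
  have := sum_le_sum_of_subset_of_nonneg hcross fun e _ _ => hx.nonneg e
  linarith

/-- Lower the weights on `L` and the bounds `M` on its cuts simultaneously by the smallest
weight on `L`. -/
theorem PartitionFeasible.sum_le_sum_mul (hx : G.PartitionFeasible x)
    (hU : ∀ f ∈ L, ∀ g ∈ L, g ∈ G.cutOf (U f) ↔ g = f) {c M : E → ℝ} (hc : ∀ f ∈ L, 0 ≤ c f)
    (hM : ∀ e, 0 ≤ M e) (hcM : ∀ f ∈ L, ∀ e ∈ G.cutOf (U f), c f ≤ M e) :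
    ∑ f ∈ L, c f ≤ ∑ e, x e * M e := by
  induction hn : L.card generalizing L c M with
  | zero =>
    rw [card_eq_zero.1 hn, sum_empty]
    exact sum_nonneg fun e _ => mul_nonneg (hx.nonneg e) (hM e)
  | succ n ih =>
    obtain ⟨f₀, hf₀, hmin⟩ := exists_min_image L c (card_pos.1 (by omega))
    set B := L.biUnion fun f => G.cutOf (U f)
    have hih := ih (L := L.erase f₀) (c := fun f => c f - c f₀)
      (M := fun e => M e - if e ∈ B then c f₀ else 0)
      (fun f hf g hg => hU f (mem_of_mem_erase hf) g (mem_of_mem_erase hg))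
      (fun f hf => sub_nonneg.2 (hmin f (mem_of_mem_erase hf)))
      (fun e => by
        split_ifs with he
        · obtain ⟨f, hf, hfe⟩ := mem_biUnion.1 he
          exact sub_nonneg.2 ((hmin f hf).trans (hcM f hf e hfe))
        · simpa using hM e)
      (fun f hf e he => by
        rw [if_pos (mem_biUnion.2 ⟨f, mem_of_mem_erase hf, he⟩)]
        exact sub_le_sub_right (hcM f (mem_of_mem_erase hf) e he) _)
      (by rw [card_erase_of_mem hf₀, hn, Nat.add_sub_cancel])
    have hL : ∑ f ∈ L.erase f₀, (c f - c f₀) = ∑ f ∈ L, c f - L.card * c f₀ := by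
      rw [sum_erase _ (sub_self _), sum_sub_distrib, sum_const, nsmul_eq_mul]
    have hB : (L.card : ℝ) * c f₀ ≤ (∑ e ∈ B, x e) * c f₀ :=
      mul_le_mul_of_nonneg_right (hx.card_le_sum_biUnion hU) (hc f₀ hf₀)
    rw [hL] at hih
    simp only [mul_sub, mul_ite, mul_zero, sum_sub_distrib, sum_ite_mem, univ_inter, ← sum_mul]
      at hih
    linarith

end Packing

section Tour

variable {V E : Type*} [Fintype E] {G : MultiGraph V E} {x : E → ℝ} {S L : Finset E}
  {U : E → V → ZMod 2} {a : ℝ} {b c : E → ℝ}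

theorem sum_mul_sum_fundamentalPath (x c : E → ℝ) :
    ∑ e, x e * ∑ f ∈ G.fundamentalPath L U e, c f =
      ∑ f ∈ L, c f * ∑ e ∈ G.cutOf (U f), x e := by
  simp only [mul_sum]
  rw [sum_comm' (t' := L) (s' := fun f => G.cutOf (U f)) (by simp [mem_fundamentalPath, and_comm])]
  simp only [mul_comm]

/-- `m` selects an edge of maximum cost on each nonempty fundamental path. -/
def IsMaxOnPaths (G : MultiGraph V E) (L : Finset E) (U : E → V → ZMod 2) (c : E → ℝ)
    (m : E → E) : Prop :=
  ∀ e, ∀ f ∈ G.fundamentalPath L U e, m e ∈ G.fundamentalPath L U e ∧ c f ≤ c (m e)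

theorem exists_isMaxOnPaths (G : MultiGraph V E) (L : Finset E) (U : E → V → ZMod 2)
    (c : E → ℝ) : ∃ m, G.IsMaxOnPaths L U c m := by
  have h (e : E) : ∃ g, ∀ f ∈ G.fundamentalPath L U e,
      g ∈ G.fundamentalPath L U e ∧ c f ≤ c g := by
    obtain hempty | hne := (G.fundamentalPath L U e).eq_empty_or_nonempty
    · exact ⟨e, by simp [hempty]⟩
    · obtain ⟨g, hg, hmax⟩ := exists_max_image _ c hne
      exact ⟨g, fun f hf => ⟨hg, hmax f hf⟩⟩
  choose m hm using h
  exact ⟨m, hm⟩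

theorem IsMaxOnPaths.erase_eq_empty {m : E → E} (hm : G.IsMaxOnPaths L U c m)
    {e : E} (he : (G.fundamentalPath L U e).card ≤ 1) :
    (G.fundamentalPath L U e).erase (m e) = ∅ := by
  refine eq_empty_of_forall_notMem fun f hf => ?_
  obtain ⟨hne, hmem⟩ := mem_erase.1 hf
  exact hne (card_le_one.1 he f hmem _ (hm e f hmem).1)

variable [Fintype V]

/-- The most expensive edge of each fundamental path is not doubled; by
`PartitionFeasible.sum_le_sum_mul` this saves at least the cost of `L` in total. -/
theorem PartitionFeasible.sum_mul_sum_erase_le (hx : G.PartitionFeasible x)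
    (hU : ∀ f ∈ L, S ∩ G.cutOf (U f) = {f}) (hc : ∀ e, 0 ≤ c e) {m : E → E}
    (hm : G.IsMaxOnPaths L U c m) :
    ∑ e, x e * ∑ f ∈ (G.fundamentalPath L U e).erase (m e), c f ≤
      ∑ f ∈ L, c f * (∑ e ∈ G.cutOf (U f), x e - 1) := by
  have hLS : ∀ f ∈ L, f ∈ S := fun f hf =>
    mem_of_mem_inter_left ((hU f hf).symm ▸ mem_singleton_self f)
  let M (e : E) : ℝ := if m e ∈ G.fundamentalPath L U e then c (m e) else 0
  have herase (e : E) : ∑ f ∈ (G.fundamentalPath L U e).erase (m e), c f =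
      ∑ f ∈ G.fundamentalPath L U e, c f - M e := by
    by_cases h : m e ∈ G.fundamentalPath L U e
    · rw [← sum_erase_add _ _ h, show M e = c (m e) from if_pos h, add_sub_cancel_right]
    · rw [erase_eq_of_notMem h, show M e = 0 from if_neg h, sub_zero]
  have hM : ∑ f ∈ L, c f ≤ ∑ e, x e * M e := by
    refine hx.sum_le_sum_mul (fun f hf g hg => mem_cutOf_iff_eq hU hf (hLS g hg))
      (fun f _ => hc f) (fun e => ?_) fun f hf e he => ?_
    · simp only [M]
      split_ifs
      exacts [hc _, le_rfl]
    · obtain ⟨hmem, hle⟩ := hm e f (mem_fundamentalPath.2 ⟨hf, he⟩)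
      exact hle.trans_eq (if_pos hmem).symm
  calc ∑ e, x e * ∑ f ∈ (G.fundamentalPath L U e).erase (m e), c f
      = ∑ f ∈ L, c f * ∑ e ∈ G.cutOf (U f), x e - ∑ e, x e * M e := by
        simp only [herase, mul_sub, sum_sub_distrib, sum_mul_sum_fundamentalPath]
    _ ≤ ∑ f ∈ L, c f * ∑ e ∈ G.cutOf (U f), x e - ∑ f ∈ L, c f := by gcongr
    _ = ∑ f ∈ L, c f * (∑ e ∈ G.cutOf (U f), x e - 1) := by
        simp only [mul_sub, mul_one, sum_sub_distrib]

theorem PartitionFeasible.exists_tour_le {T : Finset V} (hx : G.PartitionFeasible x)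
    (hS : G.ConnectedOn (· ∈ S)) (hU : ∀ f ∈ L, S ∩ G.cutOf (U f) = {f})
    (hUodd : ∀ f ∈ L, parityVec T ⬝ᵥ U f = 1) (ha : 0 ≤ a) (hc : ∀ e, 0 ≤ c e)
    (hb : ∀ e, (G.fundamentalPath L U e).card ≤ 1 ∨ b e = 0)
    (hfeas : G.JoinFeasible (parityVec T + G.boundary (S \ L)) fun e => a * x e + b e) :
    ∃ F, G.IsTTour T F ∧ (F.map c).sum ≤ ∑ e ∈ S \ L, c e + ∑ e, c e * b e +
      a * (∑ e, c e * x e + 2 * ∑ f ∈ L, c f * (∑ e ∈ G.cutOf (U f), x e - 1)) := by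
  obtain ⟨m, hm⟩ := exists_isMaxOnPaths G L U c
  let r (e : E) : ℝ := ∑ f ∈ (G.fundamentalPath L U e).erase (m e), c f
  obtain ⟨J, hJ, hcost⟩ := edmondsJohnson V E G _ _ (fun e => c e + 2 * r e) hfeas
    fun e => by have := hc e; have : 0 ≤ r e := sum_nonneg fun f _ => hc f; positivity
  refine ⟨G.augmentation S L J U m, isTTour_augmentation hS hU hUodd hJ, ?_⟩
  have hbr (e : E) : b e * r e = 0 := by
    obtain he | he := hb e
    · simp only [r, hm.erase_eq_empty he, sum_empty, mul_zero]
    · rw [he, zero_mul]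
  calc ((G.augmentation S L J U m).map c).sum
      = ∑ e ∈ S \ L, c e + ∑ e ∈ J, (c e + 2 * r e) := by
        rw [sum_map_augmentation, nsmul_eq_mul, sum_add_distrib, ← mul_sum, Nat.cast_ofNat,
          add_assoc]
    _ ≤ ∑ e ∈ S \ L, c e + ∑ e, (c e + 2 * r e) * (a * x e + b e) := by gcongr
    _ = ∑ e ∈ S \ L, c e + ∑ e, c e * b e + a * (∑ e, c e * x e + 2 * ∑ e, x e * r e) := by
        simp only [mul_sum, ← sum_add_distrib, mul_add, add_assoc]
        refine congrArg _ (sum_congr rfl fun e _ => ?_)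
        linear_combination 2 * hbr e
    _ ≤ _ := by
        gcongr
        exact hx.sum_mul_sum_erase_le hU hc hm

end Tour

section NarrowCuts

variable {V E : Type*}

theorem cut_eq_cutOf [Fintype E] (G : MultiGraph V E) (U : Finset V) :
    G.cut U = G.cutOf (parityVec U) := by
  ext e
  by_cases h : G.fst e ∈ U <;> by_cases h' : G.snd e ∈ U <;>
    simp [cut, mem_cutOf_iff_ne, parityVec, h, h']

variable [Fintype V]

theorem parityVec_filter_eq_one (w : V → ZMod 2) : parityVec (univ.filter (w · = 1)) = w := by
  funext v
  obtain h | h := zmodTwo_eq_zero_or_eq_one (w v) <;> simp [parityVec, h]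

theorem filter_eq_one_nonempty_and_ne_univ {w : V → ZMod 2} {a b : V} (hab : w a ≠ w b) :
    (univ.filter (w · = 1)).Nonempty ∧ univ.filter (w · = 1) ≠ univ := by
  refine ⟨nonempty_iff_ne_empty.2 fun h => hab ?_, fun h => hab ?_⟩
  · have hw : ∀ v, w v = 0 := fun v => zmodTwo_ne_one_iff.1 (filter_eq_empty_iff.1 h (mem_univ v))
    rw [hw, hw]
  · have hw : ∀ v, w v = 1 := fun v => filter_eq_self.1 h v (mem_univ v)
    rw [hw, hw]

variable [Fintype E] {G : MultiGraph V E} {T : Finset V} {x : E → ℝ} {S C : Finset E}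

theorem isCut_iff : G.IsCut C ↔ ∃ w : V → ZMod 2, (∃ a b, w a ≠ w b) ∧ C = G.cutOf w := by
  constructor
  · rintro ⟨U, ⟨a, ha⟩, hU, rfl⟩
    obtain ⟨b, hb⟩ := not_forall.1 (mt eq_univ_iff_forall.2 hU)
    exact ⟨parityVec U, ⟨a, b, by simp [parityVec, ha, hb]⟩, G.cut_eq_cutOf U⟩
  · rintro ⟨w, ⟨a, b, hab⟩, rfl⟩
    obtain ⟨hne, huniv⟩ := filter_eq_one_nonempty_and_ne_univ hab
    exact ⟨_, hne, huniv, by rw [cut_eq_cutOf, parityVec_filter_eq_one]⟩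

theorem LPFeasible.partitionFeasible (hx : G.LPFeasible T x) : G.PartitionFeasible x :=
  ⟨hx.1, hx.2.2⟩

theorem LPFeasible.dotProduct_eq_one (hx : G.LPFeasible T x) {w : V → ZMod 2} {a b : V}
    (hab : w a ≠ w b) (hlt : ∑ e ∈ G.cutOf w, x e < 2) : parityVec T ⬝ᵥ w = 1 := by
  obtain ⟨hne, huniv⟩ := filter_eq_one_nonempty_and_ne_univ hab
  by_contra hodd
  rw [← Ne, zmodTwo_ne_one_iff, parityVec_dotProduct, ZMod.natCast_eq_zero_iff_even] at hodd
  have hle := hx.2.1 _ hne huniv hodd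
  rw [cut_eq_cutOf, parityVec_filter_eq_one] at hle
  exact hlt.not_ge hle

theorem Narrow.exists_dotProduct_eq_one (hC : G.Narrow x C) (hx : G.LPFeasible T x) :
    ∃ w, parityVec T ⬝ᵥ w = 1 ∧ C = G.cutOf w := by
  obtain ⟨hcut, hlt⟩ := hC
  obtain ⟨w, ⟨a, b, hab⟩, rfl⟩ := isCut_iff.1 hcut
  exact ⟨w, hx.dotProduct_eq_one hab hlt, rfl⟩

theorem narrow_cutOf {w : V → ZMod 2} {a b : V} (hab : w a ≠ w b)
    (hlt : ∑ e ∈ G.cutOf w, x e < 2) : G.Narrow x (G.cutOf w) :=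
  ⟨isCut_iff.2 ⟨w, ⟨a, b, hab⟩, rfl⟩, hlt⟩

theorem inter_nonempty_of_isCut (hS : G.ConnectedOn (· ∈ S)) (hC : G.IsCut C) :
    (S ∩ C).Nonempty := by
  obtain ⟨w, ⟨a, b, hab⟩, rfl⟩ := isCut_iff.1 hC
  exact inter_cutOf_nonempty hS hab

end NarrowCuts

theorem exists_isJoin_subset {V E : Type*} [Fintype V] [Finite E] {G : MultiGraph V E}
    {τ : V → ZMod 2} {S : Finset E} (hτ : τ ⬝ᵥ 1 = 0) (hS : G.ConnectedOn (· ∈ S)) :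
    ∃ I ⊆ S, G.IsJoin τ I := by
  have := Fintype.ofFinite E
  have hnonneg (A : Finset E) (e : E) : 0 ≤ chi A e := by unfold chi; positivity
  have hfeas : G.JoinFeasible τ (chi S) := by
    refine ⟨hnonneg S, fun w hw => ?_⟩
    obtain ⟨a, b, hab⟩ := exists_ne_of_dotProduct_eq_one hτ hw
    have hcard : ∑ e ∈ G.cutOf w, chi S e = (S ∩ G.cutOf w).card := by
      simpa using sum_mul_chi (fun _ => 1) S (G.cutOf w)
    rw [hcard]
    exact_mod_cast (inter_cutOf_nonempty hS hab).card_pos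
  obtain ⟨I, hI, hcost⟩ := edmondsJohnson V E G τ (chi S) (chi Sᶜ) hfeas (hnonneg Sᶜ)
  refine ⟨I, fun e he => ?_, hI⟩
  have hle : chi Sᶜ e ≤ 0 := calc
    chi Sᶜ e ≤ ∑ e ∈ I, chi Sᶜ e := single_le_sum (fun e _ => hnonneg Sᶜ e) he
    _ ≤ ∑ e, chi Sᶜ e * chi S e := hcost
    _ = 0 := sum_eq_zero fun e _ => by by_cases h : e ∈ S <;> simp [chi, h]
  by_contra heS
  norm_num [chi, heS] at hle

section Lonely

variable {V E : Type*} [Fintype V] [Fintype E] {G : MultiGraph V E} {x : E → ℝ}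
  {p : Finset E → ℝ} {C : Finset E}

theorem Narrow.two_sub_le_sum_lonely (hC : G.Narrow x C)
    (hp : DominatedDistribution {S | G.ConnectedOn (· ∈ S)} x p) :
    2 - ∑ e ∈ C, x e ≤ ∑ S, if G.Lonely x S C then p S else 0 := by
  have hcard : ∑ S, p S * (S ∩ C).card ≤ ∑ e ∈ C, x e := by
    rw [← sum_marginal]
    exact sum_le_sum fun e _ => hp.marginal_le e
  have hterm (S : Finset E) :
      p S * 2 ≤ p S * (S ∩ C).card + if G.Lonely x S C then p S else 0 := by
    by_cases hpS : p S = 0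
    · simp [hpS]
    have hpos : 1 ≤ (S ∩ C).card :=
      (inter_nonempty_of_isCut (hp.mem_of_ne_zero S hpS) hC.1).card_pos
    obtain h | h := hpos.eq_or_lt
    · rw [if_pos ⟨hC, h.symm⟩, ← h]
      push_cast
      linarith
    · rw [if_neg fun hl => h.ne hl.2.symm, add_zero]
      gcongr
      exacts [hp.nonneg S, mod_cast h]
  have := sum_le_sum fun S (_ : S ∈ univ) => hterm S
  rw [← sum_mul, hp.sum_eq_one, sum_add_distrib] at this
  linarith

theorem Narrow.sum_even_le (hC : G.Narrow x C)
    (hp : DominatedDistribution {S | G.ConnectedOn (· ∈ S)} x p) :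
    ∑ S, (if Even (S ∩ C).card then p S else 0) ≤ ∑ e ∈ C, x e - 1 := by
  have hdisj : ∑ S, (if Even (S ∩ C).card then p S else 0) +
      ∑ S, (if G.Lonely x S C then p S else 0) ≤ ∑ S, p S := by
    rw [← sum_add_distrib]
    refine sum_le_sum fun S _ => ?_
    have := hp.nonneg S
    split_ifs with heven hlonely
    · exact absurd (hlonely.2 ▸ heven) Nat.not_even_one
    all_goals linarith
  rw [hp.sum_eq_one] at hdisj
  linarith [hC.two_sub_le_sum_lonely hp]

theorem sum_mul_vC (hC : ∑ e ∈ C, x e < 2) (p : Finset E → ℝ) (c : E → ℝ) (A : Finset E) :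
    (2 - ∑ e ∈ C, x e) * ∑ e ∈ A, c e * G.vC x p C e =
      ∑ S, (if G.Lonely x S C then p S else 0) * ∑ e ∈ (S ∩ C) ∩ A, c e := by
  have hne : 2 - ∑ e ∈ C, x e ≠ 0 := by linarith
  simp only [← sum_mul_chi, mul_sum, vC]
  rw [sum_comm]
  refine sum_congr rfl fun e _ => sum_congr rfl fun S _ => ?_
  field_simp

theorem vC_nonneg (hC : ∑ e ∈ C, x e < 2) (hp : ∀ S, 0 ≤ p S) (e : E) :
    0 ≤ G.vC x p C e := by
  refine mul_nonneg (one_div_nonneg.2 (by linarith)) (sum_nonneg fun S _ => mul_nonneg ?_ ?_)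
  · split_ifs
    exacts [hp S, le_rfl]
  · unfold chi
    positivity

theorem Narrow.one_le_sum_vC (hC : G.Narrow x C)
    (hp : DominatedDistribution {S | G.ConnectedOn (· ∈ S)} x p) :
    1 ≤ ∑ e ∈ C, G.vC x p C e := by
  have hlt : 0 < 2 - ∑ e ∈ C, x e := sub_pos.2 hC.2
  refine le_of_mul_le_mul_left ?_ hlt
  have hsum := sum_mul_vC (G := G) hC.2 p (fun _ => 1) C
  simp only [one_mul] at hsum
  rw [hsum, mul_one]
  refine (hC.two_sub_le_sum_lonely hp).trans_eq (sum_congr rfl fun S _ => ?_)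
  split_ifs with h
  · simp [inter_assoc, h.2]
  · rw [zero_mul]

end Lonely

section EvenCuts

variable {V E : Type*} [Fintype V] [Fintype E] {G : MultiGraph V E} {T : Finset V} {x c : E → ℝ}
  {p : Finset E → ℝ} {S I : Finset E}

theorem IsJoin.natCast_card_inter {τ w : V → ZMod 2} (hI : G.IsJoin τ I) :
    ((I ∩ G.cutOf w).card : ZMod 2) = τ ⬝ᵥ w := by
  rw [← sum_coboundary, hI]

/-- The narrow cuts on which adding a `T`-join to `S` leaves odd parity to be corrected. -/
noncomputable def evenNarrowCuts (G : MultiGraph V E) (x : E → ℝ) (S : Finset E) :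
    Finset (Finset E) :=
  {C ∈ G.narrowCuts x | Even (S ∩ C).card}

theorem mem_evenNarrowCuts {C : Finset E} :
    C ∈ G.evenNarrowCuts x S ↔ G.Narrow x C ∧ Even (S ∩ C).card := by
  simp [evenNarrowCuts, narrowCuts]

/-- What is missing on a cut of value `t` from `x / 2` and a `T`-join scaled by `1 / 14`. -/
noncomputable def cutDeficit (t : ℝ) : ℝ := max 0 (13 / 14 - t / 2)

/-- The correction vector repairing the deficit of every narrow cut that meets `S` evenly. -/
noncomputable def evenCutVector (G : MultiGraph V E) (x : E → ℝ) (p : Finset E → ℝ)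
    (S : Finset E) (e : E) : ℝ :=
  ∑ C ∈ G.evenNarrowCuts x S, cutDeficit (∑ f ∈ C, x f) * G.vC x p C e

theorem evenCutVector_term_nonneg (hp : ∀ S, 0 ≤ p S) {C : Finset E}
    (hC : C ∈ G.evenNarrowCuts x S) (e : E) :
    0 ≤ cutDeficit (∑ f ∈ C, x f) * G.vC x p C e :=
  mul_nonneg (le_max_left _ _) (vC_nonneg (mem_evenNarrowCuts.1 hC).1.2 hp e)

theorem evenCutVector_nonneg (hp : ∀ S, 0 ≤ p S) (e : E) : 0 ≤ G.evenCutVector x p S e :=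
  sum_nonneg fun _ hC => evenCutVector_term_nonneg hp hC e

theorem sum_mul_evenCutVector (x c : E → ℝ) (p : Finset E → ℝ) (S : Finset E) :
    ∑ e, c e * G.evenCutVector x p S e =
      ∑ C ∈ G.evenNarrowCuts x S, cutDeficit (∑ e ∈ C, x e) * ∑ e, c e * G.vC x p C e := by
  simp only [evenCutVector, mul_sum]
  rw [sum_comm]
  simp only [mul_left_comm]

theorem cutDeficit_le_sum_evenCutVector
    (hp : DominatedDistribution {S | G.ConnectedOn (· ∈ S)} x p) {C : Finset E}
    (hC : C ∈ G.evenNarrowCuts x S) :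
    cutDeficit (∑ e ∈ C, x e) ≤ ∑ e ∈ C, G.evenCutVector x p S e := calc
  cutDeficit (∑ e ∈ C, x e) ≤ cutDeficit (∑ e ∈ C, x e) * ∑ e ∈ C, G.vC x p C e :=
    le_mul_of_one_le_right (le_max_left _ _) ((mem_evenNarrowCuts.1 hC).1.one_le_sum_vC hp)
  _ ≤ ∑ e ∈ C, G.evenCutVector x p S e := by
    rw [mul_sum]
    exact sum_le_sum fun e _ => single_le_sum
      (fun D hD => evenCutVector_term_nonneg hp.nonneg hD e) hC

theorem LPFeasible.joinFeasible_evenCutVector (hx : G.LPFeasible T x) (hT : Even T.card)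
    (hp : DominatedDistribution {S | G.ConnectedOn (· ∈ S)} x p)
    (hI : G.IsJoin (parityVec T) I) :
    G.JoinFeasible (parityVec T + G.boundary S)
      fun e => 1 / 2 * x e + (1 / 14 * chi I e + G.evenCutVector x p S e) := by
  have hz := evenCutVector_nonneg (G := G) (x := x) (S := S) hp.nonneg
  refine ⟨fun e => ?_, fun w hw => ?_⟩
  · have := hx.1 e
    have := hz e
    unfold chi
    positivity
  obtain ⟨a, b, hab⟩ := exists_ne_of_dotProduct_eq_one (by
    rw [add_dotProduct, parityVec_dotProduct_one hT, boundary_dotProduct_one, add_zero]) hw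
  have hchi : ∑ e ∈ G.cutOf w, chi I e = (I ∩ G.cutOf w).card := by
    simpa using sum_mul_chi (fun _ => 1) I (G.cutOf w)
  rw [sum_add_distrib, sum_add_distrib, ← mul_sum, ← mul_sum, hchi]
  obtain h2 | h2 := le_or_gt 2 (∑ e ∈ G.cutOf w, x e)
  · have := sum_nonneg fun e (_ : e ∈ G.cutOf w) => hz e
    have : (0 : ℝ) ≤ (I ∩ G.cutOf w).card := Nat.cast_nonneg _
    linarith
  have hodd := hx.dotProduct_eq_one hab h2
  have hIcard : (1 : ℝ) ≤ (I ∩ G.cutOf w).card := by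
    rw [← hI.natCast_card_inter, ZMod.natCast_eq_one_iff_odd] at hodd
    exact_mod_cast hodd.pos
  have heven : Even (S ∩ G.cutOf w).card := by
    rw [← ZMod.natCast_eq_zero_iff_even, ← sum_coboundary, ← boundary_dotProduct]
    rw [add_dotProduct, hodd] at hw
    exact add_eq_left.1 hw
  have hcut := cutDeficit_le_sum_evenCutVector hp
    (mem_evenNarrowCuts.2 ⟨narrow_cutOf hab h2, heven⟩)
  have := (le_max_right _ _).trans hcut
  linarith

theorem LPFeasible.exists_tour_le_evenNarrowCuts (hx : G.LPFeasible T x) (hT : Even T.card)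
    (hp : DominatedDistribution {S | G.ConnectedOn (· ∈ S)} x p)
    (hS : G.ConnectedOn (· ∈ S)) (hI : G.IsJoin (parityVec T) I) (hc : ∀ e, 0 ≤ c e) :
    ∃ F, G.IsTTour T F ∧ (F.map c).sum ≤
      ∑ e ∈ S, c e + 1 / 2 * ∑ e, c e * x e + 1 / 14 * ∑ e ∈ I, c e +
        ∑ C ∈ G.evenNarrowCuts x S, cutDeficit (∑ e ∈ C, x e) * ∑ e, c e * G.vC x p C e := by
  obtain ⟨F, hF, hcost⟩ := hx.partitionFeasible.exists_tour_le (L := ∅) (U := 0) (a := 1 / 2) hS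
    (by simp) (by simp) (by norm_num) hc (fun e => .inl (by simp [fundamentalPath]))
    (by rw [sdiff_empty]; exact hx.joinFeasible_evenCutVector hT hp hI)
  refine ⟨F, hF, hcost.trans_eq ?_⟩
  have hchi : ∑ e, c e * (1 / 14 * chi I e) = 1 / 14 * ∑ e ∈ I, c e := by
    rw [← inter_univ I, ← sum_mul_chi, inter_univ, mul_sum]
    exact sum_congr rfl fun e _ => mul_left_comm _ _ _
  simp only [sdiff_empty, sum_empty, mul_zero, add_zero, mul_add, sum_add_distrib,
    sum_mul_evenCutVector, hchi]
  ring

end EvenCuts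

section LonelyCuts

variable {V E : Type*} [Fintype V] [Fintype E] {G : MultiGraph V E} {T : Finset V} {x c : E → ℝ}
  {S I C : Finset E} {U : E → V → ZMod 2}

theorem mem_lonelyCuts : C ∈ G.lonelyCuts x S ↔ G.Lonely x S C := by
  simp [lonelyCuts]

theorem mem_lonelyEdges {e : E} :
    e ∈ G.lonelyEdges x S ↔ e ∈ S ∧ ∃ C, G.Lonely x S C ∧ e ∈ C :=
  mem_filter

/-- For each lonely edge `f` of `S`, the labelling `U f` encodes a lonely cut through `f`. -/
structure IsLonelyLabelling (G : MultiGraph V E) (T : Finset V) (x : E → ℝ) (S : Finset E)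
    (U : E → V → ZMod 2) : Prop where
  dotProduct_eq_one : ∀ f ∈ G.lonelyEdges x S, parityVec T ⬝ᵥ U f = 1
  narrow : ∀ f ∈ G.lonelyEdges x S, G.Narrow x (G.cutOf (U f))
  inter_eq : ∀ f ∈ G.lonelyEdges x S, S ∩ G.cutOf (U f) = {f}

theorem LPFeasible.exists_isLonelyLabelling (hx : G.LPFeasible T x) (S : Finset E) :
    ∃ U, G.IsLonelyLabelling T x S U := by
  have h (f : E) : ∃ w, f ∈ G.lonelyEdges x S →
      parityVec T ⬝ᵥ w = 1 ∧ G.Narrow x (G.cutOf w) ∧ S ∩ G.cutOf w = {f} := by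
    by_cases hf : f ∈ G.lonelyEdges x S
    · obtain ⟨hfS, C, hC, hfC⟩ := mem_lonelyEdges.1 hf
      obtain ⟨w, hw, rfl⟩ := hC.1.exists_dotProduct_eq_one hx
      obtain ⟨g, hg⟩ := card_eq_one.1 hC.2
      obtain rfl : f = g := mem_singleton.1 (hg ▸ mem_inter.2 ⟨hfS, hfC⟩)
      exact ⟨w, fun _ => ⟨hw, hC.1, hg⟩⟩
    · exact ⟨0, fun h => absurd h hf⟩
  choose U hU using h
  exact ⟨U, fun f hf => (hU f hf).1, fun f hf => (hU f hf).2.1, fun f hf => (hU f hf).2.2⟩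

namespace IsLonelyLabelling

variable (hU : G.IsLonelyLabelling T x S U)

include hU

theorem lonelyEdges_subset (hI : G.IsJoin (parityVec T) I) (hIS : I ⊆ S) :
    G.lonelyEdges x S ⊆ I := fun f hf => by
  have hodd : Odd (I ∩ G.cutOf (U f)).card := by
    rw [← ZMod.natCast_eq_one_iff_odd, hI.natCast_card_inter, hU.dotProduct_eq_one f hf]
  obtain ⟨g, hg⟩ := card_pos.1 hodd.pos
  have hgf : g ∈ S ∩ G.cutOf (U f) := inter_subset_inter_right hIS hg
  rw [hU.inter_eq f hf, mem_singleton] at hgf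
  exact hgf ▸ mem_of_mem_inter_left hg

theorem cutOf_eq_of_lonely (hS : G.ConnectedOn (· ∈ S)) {w : V → ZMod 2} {f : E}
    (hw : S ∩ G.cutOf w = {f}) (hlonely : f ∈ G.lonelyEdges x S) :
    G.cutOf w = G.cutOf (U f) :=
  cutOf_eq_of_inter_eq hS (hw.trans (hU.inter_eq f hlonely).symm)

theorem sum_lonelyEdges (hS : G.ConnectedOn (· ∈ S)) (c : E → ℝ) (g : ℝ → ℝ) :
    ∑ f ∈ G.lonelyEdges x S, c f * g (∑ e ∈ G.cutOf (U f), x e) =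
      ∑ C ∈ G.lonelyCuts x S, g (∑ e ∈ C, x e) * ∑ e ∈ S ∩ C, c e := by
  refine sum_nbij (fun f => G.cutOf (U f)) (fun f hf => ?_) (fun f hf f' hf' h => ?_)
    (fun C hC => ?_) fun f hf => ?_
  · exact mem_lonelyCuts.2 ⟨hU.narrow f hf, by rw [hU.inter_eq f hf, card_singleton]⟩
  · dsimp only at h
    rw [← singleton_inj, ← hU.inter_eq f hf, ← hU.inter_eq f' hf', h]
  · have hlonely := mem_lonelyCuts.1 hC
    obtain ⟨f, hf⟩ := card_eq_one.1 hlonely.2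
    obtain ⟨w, -, rfl⟩ := isCut_iff.1 hlonely.1.1
    obtain ⟨hfS, hfw⟩ := mem_inter.1 (hf.symm ▸ mem_singleton_self f)
    have hfL := mem_lonelyEdges.2 ⟨hfS, _, hlonely, hfw⟩
    exact ⟨f, hfL, (hU.cutOf_eq_of_lonely hS hf hfL).symm⟩
  · rw [hU.inter_eq f hf, sum_singleton, mul_comm]

end IsLonelyLabelling

/-- On a lonely edge `f` the entry makes the cut of `U f`, together with `2 / 7 * x`, exactly
tight; the other two coefficients are those that suffice for the remaining cuts. -/
noncomputable def lonelyVector (G : MultiGraph V E) (x : E → ℝ) (S I : Finset E)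
    (U : E → V → ZMod 2) (e : E) : ℝ :=
  3 / 7 * chi (S \ I) e + (2 / 7 * chi (I \ G.lonelyEdges x S) e +
    (1 - 2 / 7 * ∑ f ∈ G.cutOf (U e), x f) * chi (G.lonelyEdges x S) e)

theorem sum_mul_lonelyVector (A : Finset E) :
    ∑ e ∈ A, c e * G.lonelyVector x S I U e =
      3 / 7 * ∑ e ∈ (S \ I) ∩ A, c e + (2 / 7 * ∑ e ∈ (I \ G.lonelyEdges x S) ∩ A, c e +
        ∑ e ∈ G.lonelyEdges x S ∩ A, c e * (1 - 2 / 7 * ∑ f ∈ G.cutOf (U e), x f)) := by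
  simp only [← sum_mul_chi, mul_sum, ← sum_add_distrib, lonelyVector]
  exact sum_congr rfl fun e _ => by ring

theorem sum_lonelyVector (A : Finset E) :
    ∑ e ∈ A, G.lonelyVector x S I U e =
      3 / 7 * ((S \ I) ∩ A).card + (2 / 7 * ((I \ G.lonelyEdges x S) ∩ A).card +
        ∑ f ∈ G.lonelyEdges x S ∩ A, (1 - 2 / 7 * ∑ e ∈ G.cutOf (U f), x e)) := by
  simpa using sum_mul_lonelyVector (c := fun _ => 1) A

theorem lonelyVector_eq_zero (hIS : I ⊆ S) {e : E} (he : e ∉ S) :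
    G.lonelyVector x S I U e = 0 := by
  have heI : e ∉ I := fun h => he (hIS h)
  simp [lonelyVector, chi, lonelyEdges, he, heI]

namespace IsLonelyLabelling

variable (hU : G.IsLonelyLabelling T x S U)

include hU

theorem three_sevenths_le {f : E} (hf : f ∈ G.lonelyEdges x S) :
    3 / 7 ≤ 1 - 2 / 7 * ∑ e ∈ G.cutOf (U f), x e := by
  linarith [(hU.narrow f hf).2]

theorem lonelyVector_nonneg (e : E) : 0 ≤ G.lonelyVector x S I U e := by
  have hchi (A : Finset E) : 0 ≤ chi A e := by unfold chi; positivity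
  refine add_nonneg (mul_nonneg (by norm_num) (hchi _))
    (add_nonneg (mul_nonneg (by norm_num) (hchi _)) ?_)
  by_cases he : e ∈ G.lonelyEdges x S
  · exact mul_nonneg (by linarith [hU.three_sevenths_le he]) (hchi _)
  · simp [chi, he]

theorem le_sum_lonelyVector (A : Finset E) :
    3 / 7 * ((S \ I) ∩ A).card + (2 / 7 * ((I \ G.lonelyEdges x S) ∩ A).card +
      3 / 7 * (G.lonelyEdges x S ∩ A).card) ≤ ∑ e ∈ A, G.lonelyVector x S I U e := by
  rw [sum_lonelyVector]
  gcongr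
  rw [mul_comm, ← nsmul_eq_mul]
  exact card_nsmul_le_sum _ _ _ fun f hf => hU.three_sevenths_le (mem_of_mem_inter_left hf)

theorem one_le_sum_cutOf_of_card_eq_one (hS : G.ConnectedOn (· ∈ S)) {w : V → ZMod 2} {f : E}
    (hf : f ∈ G.lonelyEdges x S ∩ G.cutOf w) (hcard : (S ∩ G.cutOf w).card = 1) :
    1 ≤ ∑ e ∈ G.cutOf w, (2 / 7 * x e + G.lonelyVector x S I U e) := by
  obtain ⟨hfL, hfw⟩ := mem_inter.1 hf
  obtain ⟨g, hg⟩ := card_eq_one.1 hcard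
  obtain rfl : f = g :=
    mem_singleton.1 (hg ▸ mem_inter.2 ⟨(mem_lonelyEdges.1 hfL).1, hfw⟩)
  have hsingle : 1 - 2 / 7 * ∑ e ∈ G.cutOf (U f), x e ≤
      ∑ f ∈ G.lonelyEdges x S ∩ G.cutOf w, (1 - 2 / 7 * ∑ e ∈ G.cutOf (U f), x e) :=
    single_le_sum (f := fun f => 1 - 2 / 7 * ∑ e ∈ G.cutOf (U f), x e)
      (fun f hf => by linarith [hU.three_sevenths_le (mem_of_mem_inter_left hf)]) hf
  rw [← hU.cutOf_eq_of_lonely hS hg hfL] at hsingle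
  rw [sum_add_distrib, ← mul_sum, sum_lonelyVector]
  have : (0 : ℝ) ≤ 3 / 7 * ((S \ I) ∩ G.cutOf w).card := by positivity
  have : (0 : ℝ) ≤ 2 / 7 * ((I \ G.lonelyEdges x S) ∩ G.cutOf w).card := by positivity
  linarith

theorem one_le_sum_cutOf (hx : G.LPFeasible T x) (hT : Even T.card) (hS : G.ConnectedOn (· ∈ S))
    (hI : G.IsJoin (parityVec T) I) (hIS : I ⊆ S) {w : V → ZMod 2}
    (hw : (parityVec T + G.boundary (S \ G.lonelyEdges x S)) ⬝ᵥ w = 1) :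
    1 ≤ ∑ e ∈ G.cutOf w, (2 / 7 * x e + G.lonelyVector x S I U e) := by
  obtain ⟨a, b, hab⟩ := exists_ne_of_dotProduct_eq_one (by
    rw [add_dotProduct, parityVec_dotProduct_one hT, boundary_dotProduct_one, add_zero]) hw
  have hLI := hU.lonelyEdges_subset hI hIS
  have hcardI := card_sdiff_inter_add_card_inter hLI (G.cutOf w)
  have hcardS := card_sdiff_inter_add_card_inter hIS (G.cutOf w)
  have hcardSL := card_sdiff_inter_add_card_inter (hLI.trans hIS) (G.cutOf w)
  have hodd : Odd ((I ∩ G.cutOf w).card + ((S \ G.lonelyEdges x S) ∩ G.cutOf w).card) := by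
    rw [← ZMod.natCast_eq_one_iff_odd, Nat.cast_add, hI.natCast_card_inter, ← sum_coboundary,
      ← boundary_dotProduct, ← add_dotProduct, hw]
  rw [Nat.odd_iff] at hodd
  by_cases hlonely : (S ∩ G.cutOf w).card = 1 ∧ (G.lonelyEdges x S ∩ G.cutOf w).card = 1
  · obtain ⟨f, hf⟩ := card_pos.1 (hlonely.2.symm ▸ one_pos)
    exact hU.one_le_sum_cutOf_of_card_eq_one hS hf hlonely.1
  rw [sum_add_distrib, ← mul_sum]
  have hle := hU.le_sum_lonelyVector (I := I) (G.cutOf w)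
  obtain h2 | h2 := le_or_gt 2 (∑ e ∈ G.cutOf w, x e)
  · have hcount : (1 : ℝ) ≤ ((S \ I) ∩ G.cutOf w).card + (G.lonelyEdges x S ∩ G.cutOf w).card := by
      exact_mod_cast (by omega)
    have : (0 : ℝ) ≤ ((I \ G.lonelyEdges x S) ∩ G.cutOf w).card := Nat.cast_nonneg _
    linarith
  · have hoddI := hx.dotProduct_eq_one hab h2
    rw [← hI.natCast_card_inter, ZMod.natCast_eq_one_iff_odd, Nat.odd_iff] at hoddI
    have hcount : (5 : ℝ) ≤ 3 * ((S \ I) ∩ G.cutOf w).card +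
        2 * ((I \ G.lonelyEdges x S) ∩ G.cutOf w).card +
        3 * (G.lonelyEdges x S ∩ G.cutOf w).card := by
      exact_mod_cast (by omega)
    linarith [hx.partitionFeasible.one_le_sum_cutOf hab]

end IsLonelyLabelling

theorem LPFeasible.exists_tour_le_lonelyCuts (hx : G.LPFeasible T x) (hT : Even T.card)
    (hS : G.ConnectedOn (· ∈ S)) (hI : G.IsJoin (parityVec T) I) (hIS : I ⊆ S)
    (hc : ∀ e, 0 ≤ c e) :
    ∃ F, G.IsTTour T F ∧ (F.map c).sum ≤
      10 / 7 * ∑ e ∈ S, c e + 2 / 7 * ∑ e, c e * x e - 1 / 7 * ∑ e ∈ I, c e +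
        ∑ C ∈ G.lonelyCuts x S, 2 / 7 * (∑ e ∈ C, x e - 3) * ∑ e ∈ S ∩ C, c e := by
  obtain ⟨U, hU⟩ := hx.exists_isLonelyLabelling S
  obtain ⟨F, hF, hcost⟩ := hx.partitionFeasible.exists_tour_le hS hU.inter_eq hU.dotProduct_eq_one
    (a := 2 / 7) (by norm_num) hc
    (fun e => (em (e ∈ S)).imp (card_fundamentalPath_le_one G hU.inter_eq)
      (lonelyVector_eq_zero hIS))
    ⟨fun e => add_nonneg (mul_nonneg (by norm_num) (hx.1 e)) (hU.lonelyVector_nonneg e),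
      fun w hw => hU.one_le_sum_cutOf hx hT hS hI hIS hw⟩
  refine ⟨F, hF, hcost.trans_eq ?_⟩
  have hLI := hU.lonelyEdges_subset hI hIS
  have hL : ∑ f ∈ G.lonelyEdges x S, c f * (2 / 7 * (∑ e ∈ G.cutOf (U f), x e - 3)) =
      ∑ f ∈ G.lonelyEdges x S, c f * (1 - 2 / 7 * ∑ e ∈ G.cutOf (U f), x e) +
        4 / 7 * ∑ f ∈ G.lonelyEdges x S, c f * (∑ e ∈ G.cutOf (U f), x e - 1) -
        9 / 7 * ∑ f ∈ G.lonelyEdges x S, c f := by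
    rw [mul_sum (G.lonelyEdges x S) _ (4 / 7 : ℝ), mul_sum (G.lonelyEdges x S) _ (9 / 7 : ℝ),
      ← sum_add_distrib, ← sum_sub_distrib]
    exact sum_congr rfl fun f _ => by ring
  rw [← hU.sum_lonelyEdges hS c fun t => 2 / 7 * (t - 3), hL, sum_mul_lonelyVector, inter_univ,
    inter_univ, inter_univ, sum_sdiff_eq_sub hIS, sum_sdiff_eq_sub hLI,
    sum_sdiff_eq_sub (hLI.trans hIS)]
  ring

end LonelyCuts

section Averaging

variable {V E : Type*} [Fintype V] [Fintype E] {G : MultiGraph V E} {T : Finset V} {x c : E → ℝ}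
  {p : Finset E → ℝ} {S C : Finset E}

/-- The overhead of a connected edge set `S` in the mixture of the tour built from its even narrow
cuts (weight `2 / 3`) and the tour built from its lonely cuts (weight `1 / 3`). -/
noncomputable def narrowCutCost (G : MultiGraph V E) (x c : E → ℝ) (p : Finset E → ℝ)
    (S : Finset E) : ℝ :=
  2 / 3 * ∑ C ∈ G.evenNarrowCuts x S, cutDeficit (∑ e ∈ C, x e) * ∑ e, c e * G.vC x p C e +
    1 / 3 * ∑ C ∈ G.lonelyCuts x S, 2 / 7 * (∑ e ∈ C, x e - 3) * ∑ e ∈ S ∩ C, c e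

theorem LPFeasible.exists_tour_le_narrowCutCost (hx : G.LPFeasible T x) (hT : Even T.card)
    (hp : DominatedDistribution {S | G.ConnectedOn (· ∈ S)} x p) (hS : G.ConnectedOn (· ∈ S))
    (hc : ∀ e, 0 ≤ c e) :
    ∃ F, G.IsTTour T F ∧ (F.map c).sum ≤
      8 / 7 * ∑ e ∈ S, c e + 3 / 7 * ∑ e, c e * x e + G.narrowCutCost x c p S := by
  obtain ⟨I, hIS, hI⟩ := exists_isJoin_subset (parityVec_dotProduct_one hT) hS
  obtain ⟨F, hF, hFc⟩ := hx.exists_tour_le_evenNarrowCuts hT hp hS hI hc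
  obtain ⟨F', hF', hFc'⟩ := hx.exists_tour_le_lonelyCuts hT hS hI hIS hc
  unfold narrowCutCost
  -- With weights `2 / 3` and `1 / 3` the contributions of `I` to the two bounds cancel.
  obtain h | h := le_total (F.map c).sum (F'.map c).sum
  · exact ⟨F, hF, by linarith⟩
  · exact ⟨F', hF', by linarith⟩

theorem cutDeficit_mul_add_nonpos {t : ℝ} (ht : t ≤ 2) :
    2 / 3 * (cutDeficit t * (t - 1)) + 1 / 3 * (2 / 7 * (t - 3) * (2 - t)) ≤ 0 := by
  unfold cutDeficit
  obtain h | h := le_total (13 / 14 - t / 2) 0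
  · rw [max_eq_left h]
    nlinarith
  · rw [max_eq_right h]
    -- The left-hand side is `-(3 * t - 5) ^ 2 / 21`.
    nlinarith [sq_nonneg (3 * t - 5)]

theorem sum_mul_sum_evenNarrowCuts (x : E → ℝ) (p : Finset E → ℝ) (f : Finset E → ℝ) :
    ∑ S, p S * ∑ C ∈ G.evenNarrowCuts x S, f C =
      ∑ C ∈ G.narrowCuts x, (∑ S, if Even (S ∩ C).card then p S else 0) * f C := by
  simp only [evenNarrowCuts, sum_filter, mul_sum, sum_mul]
  rw [sum_comm]
  simp only [mul_ite, ite_mul, mul_zero, zero_mul]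

theorem sum_mul_sum_lonelyCuts (x c : E → ℝ) (p : Finset E → ℝ) (f : Finset E → ℝ) :
    ∑ S, p S * ∑ C ∈ G.lonelyCuts x S, f C * ∑ e ∈ S ∩ C, c e =
      ∑ C ∈ G.narrowCuts x, f C * ((2 - ∑ e ∈ C, x e) * ∑ e, c e * G.vC x p C e) := by
  have hmem (S : Finset E) : G.lonelyCuts x S = {C ∈ G.narrowCuts x | G.Lonely x S C} := by
    ext C
    simp only [mem_lonelyCuts, narrowCuts, mem_filter, mem_univ, true_and]
    exact ⟨fun h => ⟨h.1, h⟩, And.right⟩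
  simp only [hmem, sum_filter, mul_sum (G.narrowCuts x)]
  rw [sum_comm]
  refine sum_congr rfl fun C hC => ?_
  rw [sum_mul_vC (mem_filter.1 hC).2.2, mul_sum]
  refine sum_congr rfl fun S _ => ?_
  rw [inter_univ]
  split_ifs <;> ring

theorem sum_mul_narrowCutCost_nonpos
    (hp : DominatedDistribution {S | G.ConnectedOn (· ∈ S)} x p) (hc : ∀ e, 0 ≤ c e) :
    ∑ S, p S * G.narrowCutCost x c p S ≤ 0 := by
  simp only [narrowCutCost, mul_add, sum_add_distrib, mul_left_comm (p _)]
  rw [← mul_sum, ← mul_sum, sum_mul_sum_evenNarrowCuts,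
    sum_mul_sum_lonelyCuts x c p fun C => 2 / 7 * (∑ e ∈ C, x e - 3), mul_sum, mul_sum,
    ← sum_add_distrib]
  refine sum_nonpos fun C hC => ?_
  have hC : G.Narrow x C := (mem_filter.1 hC).2
  have hv : 0 ≤ ∑ e, c e * G.vC x p C e :=
    sum_nonneg fun e _ => mul_nonneg (hc e) (vC_nonneg hC.2 hp.nonneg e)
  calc
    _ = (2 / 3 * (cutDeficit (∑ e ∈ C, x e) * ∑ S, if Even (S ∩ C).card then p S else 0) +
          1 / 3 * (2 / 7 * (∑ e ∈ C, x e - 3) * (2 - ∑ e ∈ C, x e))) *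
        ∑ e, c e * G.vC x p C e := by ring
    _ ≤ (2 / 3 * (cutDeficit (∑ e ∈ C, x e) * (∑ e ∈ C, x e - 1)) +
          1 / 3 * (2 / 7 * (∑ e ∈ C, x e - 3) * (2 - ∑ e ∈ C, x e))) *
        ∑ e, c e * G.vC x p C e := by
      gcongr
      · exact le_max_left _ _
      · exact hC.sum_even_le hp
    _ ≤ 0 := mul_nonpos_of_nonpos_of_nonneg
      (cutDeficit_mul_add_nonpos hC.2.le) hv

end Averaging

end MultiGraph

namespace MultiGraph

variable {V E : Type*} [Fintype V] [DecidableEq V] [Fintype E] [DecidableEq E]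

/-- For every feasible solution `x*` of the LP relaxation of the `T`-tour
problem, there exists a `T`-tour `F` of `G` with `c(F) ≤ (11/7)·c(x*)`. -/
theorem ttour_eleven_sevenths_approx (G : MultiGraph V E) (hG : G.Connected)
    (T : Finset V) (hT : Even T.card) (c : E → ℝ) (hc : ∀ e, 0 ≤ c e)
    (x : E → ℝ) (hx : G.LPFeasible T x) :
    ∃ F : Multiset E, G.IsTTour T F ∧
      (F.map c).sum ≤ (11 / 7 : ℝ) * ∑ e, c e * x e := by
  obtain rfl : ‹DecidableEq V› = fun a b => Classical.propDecidable (a = b) :=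
    Subsingleton.elim _ _
  obtain ⟨p, hp⟩ := hx.partitionFeasible.exists_dominatedDistribution
  have hbound : ∑ S, p S * (8 / 7 * ∑ e ∈ S, c e + 3 / 7 * ∑ e, c e * x e +
      G.narrowCutCost x c p S) ≤ 11 / 7 * ∑ e, c e * x e := by
    have hcost := hp.sum_mul_sum_le hc
    have hnarrow := sum_mul_narrowCutCost_nonpos hp hc
    simp only [mul_comm (x _)] at hcost
    simp only [mul_add, sum_add_distrib, ← sum_mul, hp.sum_eq_one, mul_left_comm (p _), ← mul_sum]
    linarith
  obtain ⟨S, hpS, hS⟩ := hp.exists_le_of_sum_mul_le hbound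
  obtain ⟨F, hF, hFc⟩ := hx.exists_tour_le_narrowCutCost hT hp (hp.mem_of_ne_zero S hpS) hc
  exact ⟨F, hF, hFc.trans hS⟩

end MultiGraph
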